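/- arXiv:2602.06361 — 3 statements merged into one kernel-verified Lean document; each statement's English description precedes it below -/
import Mathlib

section
/- Fix δ ∈ (0,1), a noise level σ² > 0, m ≥ 1 items, and Δ > 0, and let μ^a, μ^b ∈ [0,1]^m be utility profiles with OptEnvy ≤ −Δ. Let τ = ⌈32σ² log(4m/δ) · m²/Δ²⌉, and for each item i ∈ {1,…,m} and each agent ν ∈ {a,b} let μ̂^ν_i be the average of τ i.i.d. N(μ^ν_i, σ²) samples, with all 2m·τ samples mutually independent. For a set S ⊆ {1,…,m} write μ̂^ν_S = ∑_{i∈S} μ̂^ν_i. Then with probability at least 1 − δ, every allocation A = (A_a, A_b) maximizing min{μ̂^a_{A_a} − μ̂^a_{A_b}, μ̂^b_{A_b} − μ̂^b_{A_a}} over all allocations satisfies Envy(A) ≤ 0. -/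
open MeasureTheory ProbabilityTheory Real Filter
open scoped ENNReal NNReal Classical

noncomputable section

def envyAB {m : ℕ} (μa : Fin m → ℝ) (A : Finset (Fin m)) : ℝ :=
  ∑ i ∈ Aᶜ, μa i - ∑ i ∈ A, μa i

def envyBA {m : ℕ} (μb : Fin m → ℝ) (A : Finset (Fin m)) : ℝ :=
  ∑ i ∈ A, μb i - ∑ i ∈ Aᶜ, μb i

def envy {m : ℕ} (μa μb : Fin m → ℝ) (A : Finset (Fin m)) : ℝ :=
  max (envyAB μa A) (envyBA μb A)

def optEnvy {m : ℕ} (μa μb : Fin m → ℝ) : ℝ :=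
  ⨅ A : Finset (Fin m), envy μa μb A

/-- The joint law of all `2 m τ` independent noisy samples: for each item `i : Fin m`,
agent `ν : Bool` (`true` = agent a, `false` = agent b) and repetition `t : Fin τ`,
the sample `ω (i, ν, t)` is `N(μ^ν_i, v)`. -/
def obsMeasure (m τ : ℕ) (v : ℝ≥0) (μa μb : Fin m → ℝ) :
    Measure ((Fin m × Bool × Fin τ) → ℝ) :=
  Measure.pi fun p => gaussianReal (if p.2.1 then μa p.1 else μb p.1) v

/-- `μ̂^ν_S`: the sum over `i ∈ S` of the averaged estimates `μ̂^ν_i`. -/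
def estS {m τ : ℕ} (ω : (Fin m × Bool × Fin τ) → ℝ) (ν : Bool) (S : Finset (Fin m)) : ℝ :=
  ∑ i ∈ S, (∑ t, ω (i, ν, t)) / (τ : ℝ)

/-!
The estimated objective of an allocation is minus its envy with respect to the estimated utilities,
so every maximizer minimizes the estimated envy. The envy of an allocation changes by at most `m e`
when each utility changes by at most `e`; hence if all `2 m` estimates are within `e = ε / (2 m)` of
the truth, a minimizer of the estimated envy is `ε`-optimal for the true one. The averages of `τ`
samples are sub-Gaussian with parameter `v / τ`, so the Chernoff bound and a union bound over the
`2 m` estimates make them that accurate with probability at least `1 - δ`.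
-/

section Deterministic

lemma abs_sum_sub_sum_compl_le {ι R : Type*} [Fintype ι] [DecidableEq ι] [AddCommGroup R]
    [LinearOrder R] [IsOrderedAddMonoid R] (d : ι → R) (A : Finset ι) :
    |∑ i ∈ A, d i - ∑ i ∈ Aᶜ, d i| ≤ ∑ i, |d i| :=
  calc |∑ i ∈ A, d i - ∑ i ∈ Aᶜ, d i|
    _ ≤ |∑ i ∈ A, d i| + |∑ i ∈ Aᶜ, d i| := abs_sub _ _
    _ ≤ ∑ i ∈ A, |d i| + ∑ i ∈ Aᶜ, |d i| :=
        add_le_add (Finset.abs_sum_le_sum_abs _ _) (Finset.abs_sum_le_sum_abs _ _)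
    _ = ∑ i, |d i| := Finset.sum_add_sum_compl _ _

lemma le_ciInf_add_two_mul_of_forall_abs_sub_le {α : Type*} {f g : α → ℝ} {η : ℝ}
    (hfg : ∀ a, |f a - g a| ≤ η) {a : α} (ha : ∀ b, g a ≤ g b) :
    f a ≤ (⨅ b, f b) + 2 * η := by
  have : Nonempty α := ⟨a⟩
  rw [← sub_le_iff_le_add]
  refine le_ciInf fun b => ?_
  linarith [(abs_le.1 (hfg a)).2, (abs_le.1 (hfg b)).1, ha b]

variable {m : ℕ}

lemma envyBA_eq_envyAB_compl (x : Fin m → ℝ) (A : Finset (Fin m)) :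
    envyBA x A = envyAB x Aᶜ := by
  rw [envyBA, envyAB, compl_compl]

lemma abs_envyAB_sub_envyAB_le (x x' : Fin m → ℝ) (A : Finset (Fin m)) :
    |envyAB x A - envyAB x' A| ≤ ∑ i, |x i - x' i| := by
  have hdiff : envyAB x A - envyAB x' A =
      ∑ i ∈ Aᶜ, (x i - x' i) - ∑ i ∈ Aᶜᶜ, (x i - x' i) := by
    simp only [envyAB, compl_compl, Finset.sum_sub_distrib]
    ring
  exact hdiff ▸ abs_sum_sub_sum_compl_le _ _

lemma abs_envy_sub_envy_le (x y x' y' : Fin m → ℝ) (A : Finset (Fin m)) :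
    |envy x y A - envy x' y' A| ≤ max (∑ i, |x i - x' i|) (∑ i, |y i - y' i|) := by
  simp only [envy, envyBA_eq_envyAB_compl]
  exact (abs_max_sub_max_le_max _ _ _ _).trans
    (max_le_max (abs_envyAB_sub_envyAB_le _ _ _) (abs_envyAB_sub_envyAB_le _ _ _))

lemma envy_le_optEnvy_add {x y x' y' : Fin m → ℝ} {e : ℝ} (hx : ∀ i, |x' i - x i| ≤ e)
    (hy : ∀ i, |y' i - y i| ≤ e) {A : Finset (Fin m)}
    (hA : ∀ A', envy x' y' A ≤ envy x' y' A') :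
    envy x y A ≤ optEnvy x y + 2 * (m * e) := by
  have hsum {d : Fin m → ℝ} (hd : ∀ i, |d i| ≤ e) : ∑ i, |d i| ≤ m * e := by
    simpa using Finset.sum_le_card_nsmul Finset.univ (|d ·|) e fun i _ => hd i
  refine le_ciInf_add_two_mul_of_forall_abs_sub_le (fun B => ?_) hA
  rw [abs_sub_comm]
  exact (abs_envy_sub_envy_le x' y' x y B).trans (max_le (hsum hx) (hsum hy))

/-- The estimate `μ̂^ν_i` of the utility of item `i` for agent `ν` (`true` is agent a): the average
of the `τ` samples. It is `0` if `τ = 0`. -/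
def sampleMean {τ : ℕ} (ω : (Fin m × Bool × Fin τ) → ℝ) (ν : Bool) (i : Fin m) : ℝ :=
  (∑ t, ω (i, ν, t)) / τ

lemma min_estS_sub_eq_neg_envy {τ : ℕ} (ω : (Fin m × Bool × Fin τ) → ℝ) (A : Finset (Fin m)) :
    min (estS ω true A - estS ω true Aᶜ) (estS ω false Aᶜ - estS ω false A) =
      -envy (sampleMean ω true) (sampleMean ω false) A := by
  simp only [envy, envyAB, envyBA, ← min_neg_neg, neg_sub, estS, sampleMean]

end Deterministic

section SubGaussian

variable {Ω : Type*} {mΩ : MeasurableSpace Ω} {P : Measure Ω} {c : ℝ≥0}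

lemma measureReal_le_abs_le_of_hasSubgaussianMGF {Y : Ω → ℝ} (hY : HasSubgaussianMGF Y c P)
    {e : ℝ} (he : 0 ≤ e) :
    P.real {ω | e ≤ |Y ω|} ≤ 2 * exp (-e ^ 2 / (2 * c)) := by
  have hsplit : {ω | e ≤ |Y ω|} = {ω | e ≤ Y ω} ∪ {ω | e ≤ (-Y) ω} :=
    Set.ext fun _ => le_abs (α := ℝ)
  rw [hsplit, two_mul]
  exact (measureReal_union_le _ _).trans
    (add_le_add (hY.measure_ge_le he) (hY.neg.measure_ge_le he))

lemma ofReal_one_sub_le_measure_forall_abs_lt [IsProbabilityMeasure P] {κ : Type*} [Fintype κ]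
    [Nonempty κ] {Y : κ → Ω → ℝ} (hY : ∀ k, HasSubgaussianMGF (Y k) c P) (hc : 0 < c)
    {δ e : ℝ} (hδ : 0 < δ) (he : 0 ≤ e) (hce : 2 * c * log (2 * Fintype.card κ / δ) ≤ e ^ 2) :
    ENNReal.ofReal (1 - δ) ≤ P {ω | ∀ k, |Y k ω| < e} := by
  have hκ : (0 : ℝ) < Fintype.card κ := mod_cast Fintype.card_pos
  have htail (k : κ) : P.real {ω | e ≤ |Y k ω|} ≤ δ / Fintype.card κ :=
    calc P.real {ω | e ≤ |Y k ω|}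
      _ ≤ 2 * exp (-e ^ 2 / (2 * c)) := measureReal_le_abs_le_of_hasSubgaussianMGF (hY k) he
      _ ≤ 2 * exp (-log (2 * Fintype.card κ / δ)) := by
          rw [neg_div]
          gcongr
          rwa [le_div_iff₀ (by positivity), mul_comm]
      _ = δ / Fintype.card κ := by
          rw [exp_neg, exp_log (by positivity)]
          field
  have hunion : P.real (⋃ k, {ω | e ≤ |Y k ω|}) ≤ δ :=
    calc P.real (⋃ k, {ω | e ≤ |Y k ω|})
      _ ≤ ∑ k, P.real {ω | e ≤ |Y k ω|} := measureReal_iUnion_fintype_le _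
      _ ≤ ∑ _k : κ, δ / Fintype.card κ := Finset.sum_le_sum fun k _ => htail k
      _ = δ := by simp [mul_div_cancel₀ _ hκ.ne']
  have hcompl : {ω | ∀ k, |Y k ω| < e} = (⋃ k, {ω | e ≤ |Y k ω|})ᶜ := by
    ext ω
    simp
  have hmeas : NullMeasurableSet (⋃ k, {ω | e ≤ |Y k ω|}) P :=
    .iUnion fun k => nullMeasurableSet_le aemeasurable_const (hY k).aemeasurable.abs
  rw [hcompl, ← ofReal_measureReal, measureReal_compl₀ hmeas, probReal_univ]
  exact ENNReal.ofReal_le_ofReal (by linarith)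

lemma hasSubgaussianMGF_average_sub {ι : Type*} [Fintype ι] [Nonempty ι] {X : ι → Ω → ℝ}
    (hindep : iIndepFun X P) {u : ℝ} (hX : ∀ t, HasSubgaussianMGF (fun ω => X t ω - u) c P) :
    HasSubgaussianMGF (fun ω => (∑ t, X t ω) / Fintype.card ι - u) (c / Fintype.card ι) P := by
  have hindep_sub : iIndepFun (fun t ω => X t ω - u) P :=
    hindep.comp (fun _ x => x - u) fun _ => by fun_prop
  have hsum := HasSubgaussianMGF.sum_of_iIndepFun (s := Finset.univ) hindep_sub fun t _ => hX t
  convert! hsum.const_mul (Fintype.card ι : ℝ)⁻¹ using 1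
  · ext ω
    simp only [Finset.sum_sub_distrib, Finset.sum_const, Finset.card_univ, nsmul_eq_mul]
    field
  · refine NNReal.eq ?_
    change (c : ℝ) / Fintype.card ι = (Fintype.card ι : ℝ)⁻¹ ^ 2 * ↑(∑ _t : ι, c)
    simp only [Finset.sum_const, Finset.card_univ, nsmul_eq_mul, NNReal.coe_mul,
      NNReal.coe_natCast]
    field

lemma hasSubgaussianMGF_sub_gaussianReal (u : ℝ) (v : ℝ≥0) :
    HasSubgaussianMGF (fun x => x - u) v (gaussianReal u v) := by
  rw [← HasSubgaussianMGF.id_map_iff (by fun_prop), gaussianReal_map_sub_const, sub_self]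
  refine ⟨fun t => integrable_exp_mul_gaussianReal t, fun t => ?_⟩
  simp [mgf_id_gaussianReal]

end SubGaussian

section Observations

variable {m τ : ℕ} (v : ℝ≥0) (μa μb : Fin m → ℝ)

lemma iIndepFun_obsMeasure (i : Fin m) (ν : Bool) :
    iIndepFun (fun (t : Fin τ) ω => ω (i, ν, t)) (obsMeasure m τ v μa μb) :=
  (iIndepFun_pi fun _ => aemeasurable_id).precomp (g := fun t => (i, ν, t))
    fun _ _ h => by simpa using h

lemma hasSubgaussianMGF_sub_obsMeasure (p : Fin m × Bool × Fin τ) :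
    HasSubgaussianMGF (fun ω => ω p - if p.2.1 then μa p.1 else μb p.1) v
      (obsMeasure m τ v μa μb) := by
  have heval := measurePreserving_eval
    (fun p : Fin m × Bool × Fin τ => gaussianReal (if p.2.1 then μa p.1 else μb p.1) v) p
  refine HasSubgaussianMGF.of_map (μ := obsMeasure m τ v μa μb)
    (X := fun x => x - if p.2.1 then μa p.1 else μb p.1) heval.aemeasurable ?_
  rw [obsMeasure, heval.map_eq]
  exact hasSubgaussianMGF_sub_gaussianReal _ v

end Observations

lemma ofReal_one_sub_le_measure_forall_abs_sampleMean_sub_lt {Ω : Type*} {mΩ : MeasurableSpace Ω}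
    {P : Measure Ω} {v : ℝ≥0} (hv : 0 < v) {δ e : ℝ} (hδ : δ ∈ Set.Ioo (0 : ℝ) 1) (he : 0 ≤ e)
    {m τ : ℕ} (hm : 1 ≤ m) (hτ : 2 * v * log (4 * m / δ) ≤ τ * e ^ 2) {μa μb : Fin m → ℝ}
    {X : Fin m × Bool × Fin τ → Ω → ℝ} (hindep : ∀ i ν, iIndepFun (fun t => X (i, ν, t)) P)
    (hX : ∀ p, HasSubgaussianMGF (fun ω => X p ω - if p.2.1 then μa p.1 else μb p.1) v P) :
    ENNReal.ofReal (1 - δ) ≤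
      P {ω | ∀ k : Fin m × Bool,
        |sampleMean (X · ω) k.2 k.1 - if k.2 then μa k.1 else μb k.1| < e} := by
  have hm1 : (1 : ℝ) ≤ m := mod_cast hm
  have hlog : 0 < log (4 * m / δ) := log_pos <| by rw [lt_div_iff₀ hδ.1]; linarith [hδ.2]
  have hprod : 0 < τ * e ^ 2 := lt_of_lt_of_le (by positivity) hτ
  have hτ0 : 0 < τ := Nat.cast_pos.1 (pos_of_mul_pos_left hprod (sq_nonneg e))
  have : NeZero m := ⟨by lia⟩
  have : NeZero τ := ⟨hτ0.ne'⟩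
  have : IsProbabilityMeasure P := (hindep 0 true).isProbabilityMeasure
  have hmean (k : Fin m × Bool) : HasSubgaussianMGF
      (fun ω => sampleMean (X · ω) k.2 k.1 - if k.2 then μa k.1 else μb k.1) (v / τ) P := by
    simpa only [sampleMean, Fintype.card_fin] using
      hasSubgaussianMGF_average_sub (hindep k.1 k.2) fun t => hX (k.1, k.2, t)
  refine ofReal_one_sub_le_measure_forall_abs_lt hmean (by positivity) hδ.1 he ?_
  have hcard : (2 * Fintype.card (Fin m × Bool) : ℝ) = 4 * m := by simp; ring
  rw [hcard, NNReal.coe_div, NNReal.coe_natCast, mul_div_assoc', div_mul_eq_mul_div,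
    div_le_iff₀ (by positivity)]
  linarith

theorem stmt0_general {Ω : Type*} {mΩ : MeasurableSpace Ω} {P : Measure Ω} {v : ℝ≥0} (hv : 0 < v)
    {δ ε : ℝ} (hδ : δ ∈ Set.Ioo (0 : ℝ) 1) (hε : 0 < ε) {m τ : ℕ} (hm : 1 ≤ m)
    (hτ : 8 * v * log (4 * m / δ) * m ^ 2 / ε ^ 2 ≤ τ) (μa μb : Fin m → ℝ)
    {X : Fin m × Bool × Fin τ → Ω → ℝ} (hindep : ∀ i ν, iIndepFun (fun t => X (i, ν, t)) P)
    (hX : ∀ p, HasSubgaussianMGF (fun ω => X p ω - if p.2.1 then μa p.1 else μb p.1) v P) :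
    ENNReal.ofReal (1 - δ) ≤
      P {ω | ∀ A : Finset (Fin m),
        (∀ A' : Finset (Fin m),
            min (estS (X · ω) true A' - estS (X · ω) true A'ᶜ)
                (estS (X · ω) false A'ᶜ - estS (X · ω) false A') ≤
              min (estS (X · ω) true A - estS (X · ω) true Aᶜ)
                (estS (X · ω) false Aᶜ - estS (X · ω) false A)) →
        envy μa μb A ≤ optEnvy μa μb + ε} := by
  have hm0 : (0 : ℝ) < m := mod_cast hm
  have hτe : 2 * v * log (4 * m / δ) ≤ τ * (ε / (2 * m)) ^ 2 := by
    rw [div_le_iff₀ (by positivity)] at hτ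
    rw [div_pow, mul_div_assoc', le_div_iff₀ (by positivity)]
    linarith
  refine (ofReal_one_sub_le_measure_forall_abs_sampleMean_sub_lt hv hδ (by positivity) hm hτe
    hindep hX).trans (measure_mono fun ω hω A hA => ?_)
  simp only [min_estS_sub_eq_neg_envy, neg_le_neg_iff] at hA
  calc envy μa μb A
    _ ≤ optEnvy μa μb + 2 * (m * (ε / (2 * m))) :=
        envy_le_optEnvy_add (fun i => (hω (i, true)).le) (fun i => (hω (i, false)).le) hA
    _ = optEnvy μa μb + ε := by field

/-- with `τ = ⌈32σ² log(4m/δ) m²/Δ²⌉` samples per (item, agent) pair, with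
probability at least `1 - δ`, every allocation maximizing the estimated minimal negative
envy is envy-free. -/
theorem stmt0 (δ σ2 Δ : ℝ) (hδ : δ ∈ Set.Ioo (0 : ℝ) 1) (hσ2 : 0 < σ2)
    (m : ℕ) (hm : 1 ≤ m) (hΔ : 0 < Δ)
    (μa μb : Fin m → ℝ)
    (hμa : ∀ i, μa i ∈ Set.Icc (0 : ℝ) 1) (hμb : ∀ i, μb i ∈ Set.Icc (0 : ℝ) 1)
    (hopt : optEnvy μa μb ≤ -Δ)
    (τ : ℕ) (hτ : τ = ⌈32 * σ2 * Real.log (4 * m / δ) * m ^ 2 / Δ ^ 2⌉₊) :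
    ENNReal.ofReal (1 - δ) ≤
      obsMeasure m τ σ2.toNNReal μa μb
        {ω | ∀ A : Finset (Fin m),
          (∀ A' : Finset (Fin m),
              min (estS ω true A' - estS ω true A'ᶜ) (estS ω false A'ᶜ - estS ω false A') ≤
                min (estS ω true A - estS ω true Aᶜ) (estS ω false Aᶜ - estS ω false A)) →
          envy μa μb A ≤ 0} := by
  -- Accuracy `ε = Δ / 2` turns `8 / ε ^ 2` into `32 / Δ ^ 2`.
  refine (stmt0_general (Real.toNNReal_pos.2 hσ2) hδ (half_pos hΔ) hm ?_ μa μb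
    (iIndepFun_obsMeasure _ μa μb) (hasSubgaussianMGF_sub_obsMeasure _ μa μb)).trans
    (measure_mono fun ω hω A hA => (hω A hA).trans (by linarith))
  rw [Real.coe_toNNReal _ hσ2.le, hτ]
  exact le_of_eq_of_le (by field) (Nat.le_ceil _)
end
end

section
/- Let Δ : ℕ → ℝ be a sequence with Δ(m) ≥ m^{1/4}(log m)² for all sufficiently large m and Δ(m)·(log m)/m → 0 as m → ∞, and set q(m) = m·⌈15 (m^{3/2}/Δ(m)²) log m + (log m)²⌉. Then there exists, for each m, a measurable allocation rule mapping the observation vector (consisting of q(m)/m i.i.d. N(μ^ν_i, 1) samples for each item i ∈ {1,…,m} and each agent ν ∈ {a,b}, all samples mutually independent) to an allocation of the m items, such that inf over all utility profiles μ^a, μ^b ∈ [0,1]^m with OptEnvy ≤ −Δ(m) of the probability that the output allocation A satisfies Envy(A) ≤ 0 tends to 1 as m → ∞. -/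
open MeasureTheory ProbabilityTheory Real Filter
open scoped ENNReal NNReal Classical

noncomputable section

/-!
For `l ∈ [0, 1]` give each item to the agent favoured by the sign of the gap `l μᵃ - (1 - l) μᵇ`.
This maximises a convex combination of the negated envies, so the maximum is at least `-OptEnvy`.
Moving `l` from `0` to `1` while changing one weight at a time leads from the allocation giving
everything to `b` to the one giving everything to `a`, changing one item per step; a discrete
intermediate value argument on the difference of the two envies finds a step at which they differ by
at most a constant, and there both are negative.

With noisy observations the signs are estimated from a first batch of the samples. A symmetric
density around the gap `g` makes the expected gain of the item at least `g² / (4 (|g| + σ))`, hence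
by Cauchy–Schwarz the total expected gain is at least `D² / (4 (D + m σ))` with `D ≈ -OptEnvy`, and
Hoeffding's inequality turns this into a bound for each of the `m² + 1` candidates. The second batch
is independent of the candidates, so its estimates of their envies are sub-Gaussian, and the first
candidate it certifies is output.
-/

/-- The `±1`-valued sign of membership in `s`; the sign pattern of an allocation `A` is
`setSign A`. -/
def setSign {α : Type*} (s : Set α) (x : α) : ℝ := if x ∈ s then 1 else -1

lemma abs_setSign {α : Type*} (s : Set α) (x : α) : |setSign s x| = 1 := by
  unfold setSign; split_ifs <;> simp

lemma measurable_setSign {α : Type*} [MeasurableSpace α] {s : Set α} (hs : MeasurableSet s) :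
    Measurable (setSign s) :=
  Measurable.ite hs measurable_const measurable_const

/-- The gain `l x - (1 - l) y` of giving to agent `a`, rather than to agent `b`, an item that they
value at `x` and `y`, for the convex combination with weights `l` and `1 - l` of their utilities. -/
def weightedGap (l x y : ℝ) : ℝ := l * x - (1 - l) * y

section Allocation

variable {m : ℕ}

lemma envyBA_eq_sum_setSign (x : Fin m → ℝ) (A : Finset (Fin m)) :
    envyBA x A = ∑ i, setSign A i * x i := by
  rw [envyBA, ← Finset.sum_add_sum_compl A, sub_eq_add_neg, ← Finset.sum_neg_distrib]
  congr 1 <;> refine Finset.sum_congr rfl fun i hi => ?_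
  · simp [setSign, hi]
  · simp [setSign, Finset.mem_compl.mp hi]

lemma envyAB_eq_neg_envyBA (x : Fin m → ℝ) (A : Finset (Fin m)) : envyAB x A = -envyBA x A := by
  rw [envyAB, envyBA, neg_sub]

lemma envyBA_sub (x y : Fin m → ℝ) (A : Finset (Fin m)) :
    envyBA (x - y) A = envyBA x A - envyBA y A := by
  simp only [envyBA_eq_sum_setSign, Pi.sub_apply, mul_sub, Finset.sum_sub_distrib]

lemma envyBA_add (x y : Fin m → ℝ) (A : Finset (Fin m)) :
    envyBA (x + y) A = envyBA x A + envyBA y A := by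
  simp only [envyBA_eq_sum_setSign, Pi.add_apply, mul_add, Finset.sum_add_distrib]

lemma envyBA_weightedGap (l : ℝ) (x y : Fin m → ℝ) (A : Finset (Fin m)) :
    envyBA (fun i => weightedGap l (x i) (y i)) A = weightedGap l (envyBA x A) (envyBA y A) := by
  simp only [envyBA_eq_sum_setSign, weightedGap, Finset.mul_sum, ← Finset.sum_sub_distrib]
  exact Finset.sum_congr rfl fun i _ => by ring

lemma abs_envyBA_le_sum_abs (x : Fin m → ℝ) (A : Finset (Fin m)) :
    |envyBA x A| ≤ ∑ i, |x i| := by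
  rw [envyBA_eq_sum_setSign]
  refine (Finset.abs_sum_le_sum_abs _ _).trans_eq (Finset.sum_congr rfl fun i _ => ?_)
  rw [abs_mul, abs_setSign, one_mul]

lemma envy_le_envy_add {x y x' y' : Fin m → ℝ} {A : Finset (Fin m)} {η : ℝ}
    (hx : |envyBA (x' - x) A| ≤ η) (hy : |envyBA (y' - y) A| ≤ η) :
    envy x' y' A ≤ envy x y A + η := by
  rw [envyBA_sub, abs_le] at hx hy
  simp only [envy, envyAB_eq_neg_envyBA]
  refine max_le ?_ ?_
  · linarith [le_max_left (-envyBA x A) (envyBA y A)]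
  · linarith [le_max_right (-envyBA x A) (envyBA y A)]

lemma abs_envyBA_weightedGap_sub_le {μa μb : Fin m → ℝ} (ha : ∀ i, μa i ∈ Set.Icc (0 : ℝ) 1)
    (hb : ∀ i, μb i ∈ Set.Icc (0 : ℝ) 1) {l : ℝ} {w : Fin m → ℝ} (hw : ∀ i, |w i - l| ≤ 1 / m)
    (A : Finset (Fin m)) :
    |envyBA (fun i => weightedGap (w i) (μa i) (μb i)) A -
      weightedGap l (envyBA μa A) (envyBA μb A)| ≤ 2 := by
  rw [← envyBA_weightedGap, ← envyBA_sub]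
  refine (abs_envyBA_le_sum_abs _ A).trans ?_
  have hterm : ∀ i ∈ Finset.univ, |((fun i => weightedGap (w i) (μa i) (μb i)) -
      fun i => weightedGap l (μa i) (μb i)) i| ≤ 1 / (m : ℝ) * 2 := fun i _ => by
    have hsplit : ((fun i => weightedGap (w i) (μa i) (μb i)) -
        fun i => weightedGap l (μa i) (μb i)) i = (w i - l) * (μa i + μb i) := by
      simp only [Pi.sub_apply, weightedGap]; ring
    rw [hsplit, abs_mul, abs_of_nonneg (add_nonneg (ha i).1 (hb i).1)]
    exact mul_le_mul (hw i) (by linarith [(ha i).2, (hb i).2])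
      (add_nonneg (ha i).1 (hb i).1) (by positivity)
  refine (Finset.sum_le_card_nsmul _ _ _ hterm).trans ?_
  rw [Finset.card_univ, Fintype.card_fin, nsmul_eq_mul, ← mul_assoc, mul_one_div]
  exact mul_le_of_le_one_left zero_le_two (div_self_le_one _)

lemma exists_envy_eq_optEnvy (μa μb : Fin m → ℝ) : ∃ A, envy μa μb A = optEnvy μa μb :=
  exists_eq_ciInf_of_finite

lemma le_sum_abs_weightedGap {μa μb : Fin m → ℝ} (ha : ∀ i, μa i ∈ Set.Icc (0 : ℝ) 1)
    (hb : ∀ i, μb i ∈ Set.Icc (0 : ℝ) 1) {l : ℝ} (hl : l ∈ Set.Icc (0 : ℝ) 1) {w : Fin m → ℝ}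
    (hw : ∀ i, |w i - l| ≤ 1 / m) :
    -optEnvy μa μb - 2 ≤ ∑ i, |weightedGap (w i) (μa i) (μb i)| := by
  obtain ⟨A, hA⟩ := exists_envy_eq_optEnvy μa μb
  have hconst : -envy μa μb A ≤ weightedGap l (envyBA μa A) (envyBA μb A) := by
    simp only [envy, envyAB_eq_neg_envyBA, weightedGap]
    nlinarith [le_max_left (-envyBA μa A) (envyBA μb A),
      le_max_right (-envyBA μa A) (envyBA μb A), hl.1, hl.2]
  have hclose := abs_le.mp (abs_envyBA_weightedGap_sub_le ha hb hw A)
  have habs := abs_le.mp (abs_envyBA_le_sum_abs (fun i => weightedGap (w i) (μa i) (μb i)) A)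
  linarith

lemma envy_le_of_balanced {μa μb : Fin m → ℝ} (ha : ∀ i, μa i ∈ Set.Icc (0 : ℝ) 1)
    (hb : ∀ i, μb i ∈ Set.Icc (0 : ℝ) 1) {l : ℝ} (hl : l ∈ Set.Icc (0 : ℝ) 1) {w : Fin m → ℝ}
    (hw : ∀ i, |w i - l| ≤ 1 / m) {A : Finset (Fin m)} {δ : ℝ}
    (hA : |envyBA (μa + μb) A| ≤ δ) :
    envy μa μb A ≤ -envyBA (fun i => weightedGap (w i) (μa i) (μb i)) A + 2 + δ := by
  have hclose := abs_le.mp (abs_envyBA_weightedGap_sub_le ha hb hw A)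
  rw [envyBA_add, abs_le] at hA
  rw [weightedGap] at hclose
  simp only [envy, envyAB_eq_neg_envyBA]
  refine max_le ?_ ?_ <;> nlinarith [hl.1, hl.2]

lemma abs_envyBA_sub_le_of_agree_off {x : Fin m → ℝ} {c : ℝ} (hx : ∀ i, |x i| ≤ c)
    {A B : Finset (Fin m)} (j : Fin m) (h : ∀ i ≠ j, i ∈ A ↔ i ∈ B) :
    |envyBA x A - envyBA x B| ≤ 2 * c := by
  have hsum : envyBA x A - envyBA x B = (setSign A j - setSign B j) * x j := by
    rw [envyBA_eq_sum_setSign, envyBA_eq_sum_setSign, ← Finset.sum_sub_distrib]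
    simp only [← sub_mul]
    refine Fintype.sum_eq_single j fun i hi => ?_
    simp only [setSign, Finset.mem_coe, h i hi, sub_self, zero_mul]
  rw [hsum, abs_mul]
  refine mul_le_mul ((abs_sub _ _).trans_eq ?_) (hx j) (abs_nonneg _) zero_le_two
  rw [abs_setSign, abs_setSign, one_add_one_eq_two]

end Allocation

lemma exists_abs_le_of_abs_sub_le {f : ℕ → ℝ} {N : ℕ} {c : ℝ} (h0 : f 0 ≤ 0) (hN : 0 ≤ f N)
    (hstep : ∀ n, |f (n + 1) - f n| ≤ c) : ∃ n ≤ N, |f n| ≤ c := by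
  have hex : ∃ n, 0 ≤ f n := ⟨N, hN⟩
  refine ⟨Nat.find hex, Nat.find_min' hex hN, ?_⟩
  rw [abs_of_nonneg (Nat.find_spec hex)]
  rcases hn : Nat.find hex with _ | n
  · exact h0.trans ((abs_nonneg _).trans (hstep 0))
  · have hneg : f n < 0 := not_le.mp (Nat.find_min hex (hn ▸ n.lt_succ_self))
    linarith [le_of_abs_le (hstep n)]

section Path

variable {m : ℕ}

/-- The weight of item `i` at step `n` of the interpolation, in `m ^ 2` steps, between all weights
`0` and all weights `1`. The shift by `i` makes the weights change one at a time while keeping each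
of them within `1 / m` of `n / m ^ 2`. -/
def pathWeight (m n : ℕ) (i : Fin m) : ℝ := ((n + i) / m : ℕ) / m

lemma pathWeight_zero (i : Fin m) : pathWeight m 0 i = 0 := by
  simp [pathWeight, Nat.div_eq_of_lt i.isLt]

lemma pathWeight_sq (i : Fin m) : pathWeight m (m ^ 2) i = 1 := by
  have hm : 0 < m := i.pos
  have hdiv : (m ^ 2 + i) / m = m := by
    rw [sq, Nat.mul_add_div hm, Nat.div_eq_of_lt i.isLt, add_zero]
  rw [pathWeight, hdiv, div_self (by positivity)]

lemma pathWeight_mem_Icc {n : ℕ} (hn : n ≤ m ^ 2) (i : Fin m) :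
    pathWeight m n i ∈ Set.Icc (0 : ℝ) 1 := by
  refine ⟨by unfold pathWeight; positivity, ?_⟩
  rw [← pathWeight_sq i, pathWeight, pathWeight]
  gcongr

lemma abs_pathWeight_sub_le (n : ℕ) (i : Fin m) :
    |pathWeight m n i - n / (m : ℝ) ^ 2| ≤ 1 / m := by
  have hm : 0 < m := i.pos
  have hi : (i : ℝ) ≤ m := by exact_mod_cast i.isLt.le
  have hlower : (((n + i) / m : ℕ) : ℝ) * m ≤ n + i := by
    exact_mod_cast Nat.div_mul_le_self (n + i) m
  have hupper : (n : ℝ) + i ≤ (((n + i) / m : ℕ) + 1) * m := by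
    exact_mod_cast (Nat.lt_mul_of_div_lt (Nat.lt_succ_self _) hm).le
  have hm' : (0 : ℝ) < m := by exact_mod_cast hm
  have hcommon : pathWeight m n i - n / (m : ℝ) ^ 2 = (((n + i) / m : ℕ) * m - n) / m / m := by
    rw [pathWeight]; field_simp
  rw [hcommon, abs_div, Nat.abs_cast]
  gcongr
  rw [abs_div, Nat.abs_cast, div_le_one hm', abs_le]
  constructor <;> linarith [(i : ℕ).cast_nonneg (α := ℝ)]

lemma div_sq_mem_Icc {n : ℕ} (hn : n ≤ m ^ 2) : n / (m : ℝ) ^ 2 ∈ Set.Icc (0 : ℝ) 1 :=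
  ⟨by positivity, div_le_one_of_le₀ (by exact_mod_cast hn) (by positivity)⟩

lemma exists_pathWeight_succ_eq_of_ne (hm : 0 < m) (n : ℕ) :
    ∃ j : Fin m, ∀ i ≠ j, pathWeight m (n + 1) i = pathWeight m n i := by
  have hsucc : ∀ i : Fin m, ¬m ∣ n + i + 1 → pathWeight m (n + 1) i = pathWeight m n i :=
    fun i hi => by rw [pathWeight, pathWeight, add_right_comm, Nat.succ_div_of_not_dvd hi]
  by_cases h : ∃ j : Fin m, m ∣ n + j + 1
  · obtain ⟨j, hj⟩ := h
    refine ⟨j, fun i hij => hsucc i fun hi => hij (Fin.ext ?_)⟩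
    have hmod : n + i + 1 ≡ n + j + 1 [MOD m] :=
      (Nat.modEq_zero_iff_dvd.mpr hi).trans (Nat.modEq_zero_iff_dvd.mpr hj).symm
    exact ((hmod.add_right_cancel' 1).add_left_cancel' n).eq_of_lt_of_lt i.isLt j.isLt
  · exact ⟨⟨0, hm⟩, fun i _ => hsucc i (not_exists.mp h i)⟩

lemma exists_abs_envyBA_le_of_path {x : Fin m → ℝ} {c : ℝ} (hx : ∀ i, x i ∈ Set.Icc 0 c)
    {A : ℕ → Finset (Fin m)} {N : ℕ} (h_zero : A 0 = ∅) (h_last : A N = Finset.univ)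
    (h_step : ∀ n, ∃ j, ∀ i ≠ j, i ∈ A (n + 1) ↔ i ∈ A n) :
    ∃ n ≤ N, |envyBA x (A n)| ≤ 2 * c := by
  have hsum : 0 ≤ ∑ i, x i := Finset.sum_nonneg fun i _ => (hx i).1
  refine exists_abs_le_of_abs_sub_le ?_ ?_ fun n => ?_
  · simpa [envyBA, h_zero] using hsum
  · simpa [envyBA, h_last] using hsum
  · obtain ⟨j, hj⟩ := h_step n
    exact abs_envyBA_sub_le_of_agree_off
      (fun i => (abs_of_nonneg (hx i).1).trans_le (hx i).2) j hj

lemma exists_envy_le_of_path {μa μb : Fin m → ℝ} (ha : ∀ i, μa i ∈ Set.Icc (0 : ℝ) 1)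
    (hb : ∀ i, μb i ∈ Set.Icc (0 : ℝ) 1) {A : ℕ → Finset (Fin m)} {γ : ℝ}
    (h_zero : A 0 = ∅) (h_last : A (m ^ 2) = Finset.univ)
    (h_step : ∀ n, ∃ j, ∀ i ≠ j, i ∈ A (n + 1) ↔ i ∈ A n)
    (h_gain : ∀ n ≤ m ^ 2,
      γ ≤ envyBA (fun i => weightedGap (pathWeight m n i) (μa i) (μb i)) (A n)) :
    ∃ n ≤ m ^ 2, envy μa μb (A n) ≤ 6 - γ := by
  have hab : ∀ i, (μa + μb) i ∈ Set.Icc (0 : ℝ) 2 := fun i =>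
    ⟨add_nonneg (ha i).1 (hb i).1, (add_le_add (ha i).2 (hb i).2).trans_eq one_add_one_eq_two⟩
  obtain ⟨n, hn, hbal⟩ := exists_abs_envyBA_le_of_path hab h_zero h_last h_step
  refine ⟨n, hn, ?_⟩
  linarith [envy_le_of_balanced ha hb (div_sq_mem_Icc hn)
    (fun i => abs_pathWeight_sub_le n i) hbal, h_gain n hn]

end Path

section Gaussian

lemma hasLaw_sum_mul_pi_gaussianReal {ι : Type*} [Fintype ι] (M c : ι → ℝ) (v : ℝ≥0)
    (s : Finset ι) :
    HasLaw (fun ω => ∑ p ∈ s, c p * ω p)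
      (gaussianReal (∑ p ∈ s, c p * M p) ((∑ p ∈ s, ‖c p‖₊ ^ 2) * v))
      (Measure.pi fun p => gaussianReal (M p) v) := by
  set P := Measure.pi fun p => gaussianReal (M p) v
  have hindep : iIndepFun (fun p (ω : ι → ℝ) => c p * ω p) P :=
    iIndepFun_pi (μ := fun p => gaussianReal (M p) v) (X := fun p x => c p * x)
      fun p => by fun_prop
  have hlaw : ∀ p, P.map (fun ω => c p * ω p) = gaussianReal (c p * M p) (‖c p‖₊ ^ 2 * v) := by
    intro p
    rw [(gaussianReal_const_mul
      (measurePreserving_eval (fun p => gaussianReal (M p) v) p).hasLaw (c p)).map_eq]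
    congr 2
    ext
    simp
  refine ⟨(Finset.measurable_sum s fun p _ => by fun_prop).aemeasurable, ?_⟩
  induction s using Finset.induction_on with
  | empty => simp
  | insert i s hi ih =>
    have hsum : P.map (∑ p ∈ s, fun ω => c p * ω p) =
        gaussianReal (∑ p ∈ s, c p * M p) ((∑ p ∈ s, ‖c p‖₊ ^ 2) * v) := by
      rw [← ih]; congr 1; ext ω; simp only [Finset.sum_apply]
    have h := gaussianReal_add_gaussianReal_of_indepFun
      (hindep.indepFun_finsetSum_of_notMem (fun i => by fun_prop) hi).symm (hlaw i) hsum
    rw [Finset.sum_insert hi, Finset.sum_insert hi, add_mul, ← h]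
    congr 1
    ext ω
    simp only [Finset.sum_insert hi, Pi.add_apply, Finset.sum_apply]

lemma hasSubgaussianMGF_of_hasLaw_gaussianReal {Ω : Type*} [MeasurableSpace Ω] {P : Measure Ω}
    {X : Ω → ℝ} {v c : ℝ≥0} (hX : HasLaw X (gaussianReal 0 v) P) (hv : v ≤ c) :
    HasSubgaussianMGF X c P where
  integrable_exp_mul t := by
    have h := integrable_exp_mul_gaussianReal (μ := 0) (v := v) t
    rw [← hX.map_eq] at h
    exact h.comp_aemeasurable hX.aemeasurable
  mgf_le t := by
    rw [mgf_gaussianReal hX.map_eq, zero_mul, zero_add]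
    gcongr

variable {M : ℝ} {v : ℝ≥0}

lemma one_div_le_gaussianPDFReal (hv : v ≠ 0) {x : ℝ} (hx : (x - M) ^ 2 ≤ v) :
    1 / (8 * √v) ≤ gaussianPDFReal M v x := by
  have : (0 : ℝ) < v := by positivity
  have hexponent : -1 / 2 ≤ -(x - M) ^ 2 / (2 * v) := by
    rw [div_le_div_iff₀ two_pos (by positivity)]; linarith
  have hexp : 1 / 2 ≤ rexp (-(x - M) ^ 2 / (2 * v)) := by
    linarith [add_one_le_exp (-(x - M) ^ 2 / (2 * v))]
  have hnorm : √(2 * π * v) ≤ 4 * √v := by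
    rw [sqrt_mul (by positivity)]
    gcongr
    exact sqrt_le_iff.mpr ⟨by norm_num, by linarith [pi_le_four]⟩
  calc 1 / (8 * √v) = (4 * √v)⁻¹ * (1 / 2) := by field_simp; norm_num
    _ ≤ (√(2 * π * v))⁻¹ * rexp (-(x - M) ^ 2 / (2 * v)) := by gcongr

lemma div_four_le_gaussianReal_Ioo (hv : v ≠ 0) {w : ℝ} (hw0 : 0 ≤ w) (hw1 : w ≤ 1) :
    w / 4 ≤ (gaussianReal M v).real (Set.Ioo (M - w * √v) (M + w * √v)) := by
  have hsv : 0 < √(v : ℝ) := sqrt_pos.mpr (by positivity)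
  have hdensity : ∀ x ∈ Set.Ioo (M - w * √v) (M + w * √v),
      1 / (8 * √v) ≤ gaussianPDFReal M v x := fun x hx => by
    have hdist : |x - M| ≤ √v := abs_le.mpr ⟨by nlinarith [hx.1], by nlinarith [hx.2]⟩
    refine one_div_le_gaussianPDFReal hv ?_
    rw [← sq_abs, ← sq_sqrt v.coe_nonneg]
    gcongr
  rw [measureReal_def, gaussianReal_apply_eq_integral M hv, ENNReal.toReal_ofReal
    (setIntegral_nonneg measurableSet_Ioo fun x _ => gaussianPDFReal_nonneg _ _ _)]
  calc w / 4 = ∫ _ in Set.Ioo (M - w * √v) (M + w * √v), 1 / (8 * √v) := by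
        rw [setIntegral_const, volume_real_Ioo_of_le (by nlinarith), smul_eq_mul]
        field_simp; ring
    _ ≤ ∫ x in Set.Ioo (M - w * √v) (M + w * √v), gaussianPDFReal M v x :=
        setIntegral_mono_on (integrableOn_const (by simp))
          (integrable_gaussianPDFReal M v).integrableOn measurableSet_Ioo hdensity

lemma le_gaussianReal_Ioo_zero_two_mul (hM : 0 < M) {σ : ℝ≥0} (hv : v ≤ σ ^ 2) :
    M / (4 * (M + σ)) ≤ (gaussianReal M v).real (Set.Ioo 0 (2 * M)) := by
  have hw1 : M / (M + σ) ≤ 1 := div_le_one_of_le₀ (by simp) (by positivity)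
  have hquarter : M / (4 * (M + σ)) = M / (M + σ) / 4 := by rw [div_div, mul_comm]
  rw [hquarter]
  rcases eq_or_ne v 0 with rfl | hv0
  · have hmem : M ∈ Set.Ioo 0 (2 * M) := ⟨hM, by linarith⟩
    rw [gaussianReal_zero_var, measureReal_def, Measure.dirac_apply_of_mem hmem,
      ENNReal.toReal_one]
    linarith
  · have hsqrt : √v ≤ σ := (sqrt_le_left σ.coe_nonneg).mpr (by exact_mod_cast hv)
    have hwidth : M / (M + σ) * √v ≤ M := by
      rw [div_mul_eq_mul_div]
      exact div_le_of_le_mul₀ (by positivity) hM.le (by gcongr; linarith)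
    exact (div_four_le_gaussianReal_Ioo hv0 (by positivity) hw1).trans
      (measureReal_mono (Set.Ioo_subset_Ioo (by linarith) (by linarith)))

lemma gaussianReal_Ioi_sub_Iic (hM : 0 < M) :
    (gaussianReal M v).real (Set.Ioi 0) - (gaussianReal M v).real (Set.Iic 0) =
      (gaussianReal M v).real (Set.Ioo 0 (2 * M)) := by
  have hreflect : (gaussianReal M v).real (Set.Ici (2 * M)) =
      (gaussianReal M v).real (Set.Iic 0) := by
    have hmap := gaussianReal_map_const_sub (μ := M) (v := v) (2 * M)
    rw [two_mul, add_sub_cancel_right, ← two_mul] at hmap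
    conv_lhs => rw [← hmap]
    rw [map_measureReal_apply (by fun_prop) measurableSet_Ici]
    congr 1
    ext x
    simp
  have hdisj : Disjoint (Set.Ioo 0 (2 * M)) (Set.Ici (2 * M)) :=
    Set.disjoint_left.mpr fun x hx hx' => not_le.mpr hx.2 hx'
  rw [← Set.Ioo_union_Ici_eq_Ioi (by linarith : 0 < 2 * M),
    measureReal_union hdisj measurableSet_Ici, hreflect, add_sub_cancel_right]

lemma le_mul_gaussianReal_Ioi_sub_Iic (M : ℝ) {σ : ℝ≥0} (hv : v ≤ σ ^ 2) :
    M ^ 2 / (4 * (|M| + σ)) ≤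
      M * ((gaussianReal M v).real (Set.Ioi 0) - (gaussianReal M v).real (Set.Iic 0)) := by
  have hpos : ∀ N : ℝ, 0 < N → N ^ 2 / (4 * (N + σ)) ≤
      N * ((gaussianReal N v).real (Set.Ioi 0) - (gaussianReal N v).real (Set.Iic 0)) := by
    intro N hN
    rw [gaussianReal_Ioi_sub_Iic hN, sq, mul_div_assoc]
    exact mul_le_mul_of_nonneg_left (le_gaussianReal_Ioo_zero_two_mul hN hv) hN.le
  rcases lt_trichotomy M 0 with hM | rfl | hM
  · have hmap := gaussianReal_map_neg (μ := -M) (v := v)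
    rw [neg_neg] at hmap
    have hIoi : (gaussianReal M v).real (Set.Ioi 0) ≤ (gaussianReal (-M) v).real (Set.Iic 0) := by
      rw [← hmap, map_measureReal_apply measurable_neg measurableSet_Ioi]
      exact measureReal_mono fun x hx => Set.mem_Iic.mpr (neg_pos.mp hx).le
    have hIic : (gaussianReal (-M) v).real (Set.Ioi 0) ≤ (gaussianReal M v).real (Set.Iic 0) := by
      rw [← hmap, map_measureReal_apply measurable_neg measurableSet_Iic]
      exact measureReal_mono fun x (hx : 0 < x) => neg_nonpos.mpr hx.le
    have hneg := hpos (-M) (neg_pos.mpr hM)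
    rw [neg_sq, ← abs_of_neg hM] at hneg
    refine hneg.trans ?_
    rw [abs_of_neg hM]
    nlinarith
  · simp
  · simpa only [abs_of_pos hM] using hpos M hM

end Gaussian

section Concentration

variable {Ω : Type*} [MeasurableSpace Ω] {P : Measure Ω} [IsProbabilityMeasure P]

lemma hasSubgaussianMGF_mul_of_indepFun {Z X : Ω → ℝ} {c : ℝ≥0} (hZ : Measurable Z)
    (hZ1 : ∀ ω, |Z ω| ≤ 1) (hX : HasSubgaussianMGF X c P) (hindep : IndepFun Z X P) :
    HasSubgaussianMGF (fun ω => Z ω * X ω) c P := by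
  have hint : ∀ t, Integrable (fun ω => rexp (t * (Z ω * X ω))) P := fun t => by
    refine ((hX.integrable_exp_mul t).add (hX.integrable_exp_mul (-t))).mono'
      (((hZ.aemeasurable.mul hX.aemeasurable).const_mul t).exp.aestronglyMeasurable)
      (.of_forall fun ω => ?_)
    rw [norm_of_nonneg (exp_pos _).le, mul_left_comm, Pi.add_apply, neg_mul]
    have hle : Z ω * (t * X ω) ≤ |t * X ω| := (le_abs_self _).trans
      ((abs_mul _ _).trans_le (mul_le_of_le_one_left (abs_nonneg _) (hZ1 ω)))
    exact (exp_le_exp.mpr hle).trans (exp_abs_le _)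
  refine ⟨hint, fun t => ?_⟩
  have := Measure.isProbabilityMeasure_map (μ := P) hZ.aemeasurable
  have hlaw := (indepFun_iff_map_prod_eq_prod_map_map hZ.aemeasurable hX.aemeasurable).mp hindep
  have hmeas : AEStronglyMeasurable (fun z : ℝ × ℝ => rexp (t * (z.1 * z.2)))
      (P.map fun ω => (Z ω, X ω)) := by fun_prop
  have hpair := hZ.aemeasurable.prodMk hX.aemeasurable
  have hint' : Integrable (fun z : ℝ × ℝ => rexp (t * (z.1 * z.2))) ((P.map Z).prod (P.map X)) :=
    hlaw ▸ (integrable_map_measure hmeas hpair).mpr (hint t)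
  have hZ1' : ∀ᵐ z ∂P.map Z, |z| ≤ 1 := (ae_map_iff hZ.aemeasurable
    (measurableSet_le (by fun_prop) measurable_const)).mpr (.of_forall hZ1)
  have hinner : ∀ᵐ z ∂P.map Z, ∫ x, rexp (t * (z * x)) ∂P.map X ≤ rexp (c * t ^ 2 / 2) := by
    filter_upwards [hZ1'] with z hz
    rw [integral_map hX.aemeasurable (by fun_prop)]
    simp only [← mul_assoc]
    refine (hX.mgf_le (t * z)).trans (exp_le_exp.mpr ?_)
    rw [mul_pow]
    gcongr
    exact mul_le_of_le_one_right (sq_nonneg t) ((sq_le_one_iff_abs_le_one _).mpr hz)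
  calc mgf (fun ω => Z ω * X ω) P t
      = ∫ z, ∫ x, rexp (t * (z * x)) ∂P.map X ∂P.map Z := by
        rw [← integral_prod _ hint', ← hlaw, integral_map hpair hmeas, mgf]
    _ ≤ ∫ _, rexp (c * t ^ 2 / 2) ∂P.map Z :=
        integral_mono_ae hint'.integral_prod_left (integrable_const _) hinner
    _ = rexp (c * t ^ 2 / 2) := by simp

lemma measureReal_sum_le_half_le_exp {ι : Type*} [Fintype ι] {X : ι → Ω → ℝ}
    (hindep : iIndepFun X P) (hmeas : ∀ i, Measurable (X i)) {K : ℝ} (hK : 0 < K)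
    (hX : ∀ i ω, X i ω ^ 2 ≤ K * P[X i]) :
    P.real {ω | ∑ i, X i ω ≤ (∑ i, P[X i]) / 2} ≤ rexp (-(∑ i, P[X i]) / (8 * K)) := by
  have hpos : ∀ i, 0 ≤ K * P[X i] := fun i =>
    (P.nonempty_of_neZero).elim fun ω => (sq_nonneg _).trans (hX i ω)
  set M := ∑ i, P[X i] with hM
  have hM0 : 0 ≤ M := Finset.sum_nonneg fun i _ => nonneg_of_mul_nonneg_right (hpos i) hK
  set c : ι → ℝ≥0 := fun i => (K * P[X i]).toNNReal with hc
  have hsub : ∀ i ∈ Finset.univ, HasSubgaussianMGF (fun ω => -(X i ω - P[X i])) (c i) P := by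
    intro i _
    have hIcc : ∀ᵐ ω ∂P, X i ω ∈ Set.Icc (-√(K * P[X i])) (√(K * P[X i])) :=
      .of_forall fun ω => abs_le.mp (abs_le_sqrt (hX i ω))
    have h := (hasSubgaussianMGF_of_mem_Icc (hmeas i).aemeasurable hIcc).neg
    rwa [show (‖√(K * P[X i]) - -√(K * P[X i])‖₊ / 2) ^ 2 = c i from
      NNReal.eq (by simp [hc, ← two_mul, sq_sqrt (hpos i), coe_toNNReal _ (hpos i)])] at h
  have hindep' : iIndepFun (fun i ω => -(X i ω - P[X i])) P :=
    hindep.comp (fun i x => -(x - ∫ ω, X i ω ∂P)) fun i => by fun_prop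
  have hHoeffding := HasSubgaussianMGF.measure_sum_ge_le_of_iIndepFun hindep' hsub
    (by positivity : 0 ≤ M / 2)
  have hc_sum : ((∑ i, c i : ℝ≥0) : ℝ) = K * M := by
    simp only [NNReal.coe_sum, hc, coe_toNNReal _ (hpos _), hM, Finset.mul_sum]
  rw [hc_sum] at hHoeffding
  have hevent : {ω | ∑ i, X i ω ≤ M / 2} = {ω | M / 2 ≤ ∑ i, -(X i ω - P[X i])} := by
    ext ω
    simp only [Set.mem_ofPred_eq, Finset.sum_neg_distrib, Finset.sum_sub_distrib, ← hM]
    constructor <;> intro h <;> linarith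
  rw [hevent]
  refine hHoeffding.trans_eq (congrArg rexp ?_)
  rcases hM0.eq_or_lt with h | h
  · simp [← h]
  · field_simp; norm_num

end Concentration

section Item

variable {τ : ℕ} {v σ : ℝ≥0} {l x y : ℝ} {S T : Finset (Fin τ)}

/-- The joint law of the samples of a single item with utilities `x` for agent `a` and `y` for
agent `b`, indexed as in `obsMeasure`. -/
def itemMeasure (τ : ℕ) (v : ℝ≥0) (x y : ℝ) : Measure (Bool × Fin τ → ℝ) :=
  Measure.pi fun p => gaussianReal (if p.1 then x else y) v

instance : IsProbabilityMeasure (itemMeasure τ v x y) := by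
  unfold itemMeasure; infer_instance

/-- The empirical utility of an item for each agent, computed from the repetitions in the
batch `S`. -/
def batchMean (S : Finset (Fin τ)) (z : Bool × Fin τ → ℝ) (ν : Bool) : ℝ :=
  (∑ t ∈ S, z (ν, t)) / S.card

/-- The pairs of empirical utilities for which an item of weight `l` is given to agent `a`: the
gap is positive, except that the weights `0` and `1` force the decision. -/
def takeSet (l : ℝ) : Set (Bool → ℝ) :=
  {e | l = 1 ∨ l ≠ 0 ∧ 0 < weightedGap l (e true) (e false)}

@[fun_prop]
lemma measurable_batchMean (S : Finset (Fin τ)) : Measurable (batchMean S) := by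
  unfold batchMean; fun_prop

lemma measurableSet_takeSet (l : ℝ) : MeasurableSet (takeSet l) := by
  unfold takeSet weightedGap; measurability

lemma hasLaw_batchMean (hS : S.Nonempty) (α β : ℝ) :
    HasLaw (fun z => α * batchMean S z true + β * batchMean S z false)
      (gaussianReal (α * x + β * y) ((‖α‖₊ ^ 2 + ‖β‖₊ ^ 2) * (v / S.card)))
      (itemMeasure τ v x y) := by
  have hcard : (S.card : ℝ≥0) ≠ 0 := by exact_mod_cast hS.card_ne_zero
  have hcard' : (S.card : ℝ) ≠ 0 := by exact_mod_cast hcard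
  have h := hasLaw_sum_mul_pi_gaussianReal (fun p : Bool × Fin τ => if p.1 then x else y)
    (fun p => (if p.1 then α else β) / S.card) v (Finset.univ ×ˢ S)
  simp only [Finset.sum_product, Fintype.sum_bool, if_true, Bool.false_eq_true, if_false,
    Finset.sum_const, nsmul_eq_mul, ← Finset.mul_sum, nnnorm_div, nnnorm_natCast] at h
  rw [itemMeasure]
  convert h using 1
  · ext z; simp only [batchMean]; ring
  · congr 1 <;> field_simp

lemma indepFun_batchMean (hST : Disjoint S T) :
    IndepFun (batchMean S) (batchMean T) (itemMeasure τ v x y) := by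
  have hcoord : iIndepFun (fun p (z : Bool × Fin τ → ℝ) => z p) (itemMeasure τ v x y) :=
    iIndepFun_pi (X := fun _ z => z) fun p => by fun_prop
  have hdisj : Disjoint (Finset.univ ×ˢ S : Finset (Bool × Fin τ)) (Finset.univ ×ˢ T) :=
    Finset.disjoint_product.mpr (Or.inr hST)
  have hmean : ∀ U : Finset (Fin τ), batchMean U =
      (fun (u : (Finset.univ ×ˢ U : Finset (Bool × Fin τ)) → ℝ) ν =>
        (∑ t : U, u ⟨(ν, t), by simp⟩) / U.card) ∘ fun z p => z p := by
    intro U; ext z ν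
    simp only [batchMean, Function.comp_apply, Finset.univ_eq_attach,
      Finset.sum_attach U fun t => z (ν, t)]
  rw [hmean S, hmean T]
  exact (hcoord.indepFun_finset _ _ hdisj fun p => by fun_prop).comp (by fun_prop) (by fun_prop)

lemma integral_setSign {Ω : Type*} [MeasurableSpace Ω] {P : Measure Ω} [IsFiniteMeasure P]
    {s : Set Ω} (hs : MeasurableSet s) : ∫ ω, setSign s ω ∂P = P.real s - P.real sᶜ := by
  have hsplit : setSign s = fun ω => s.indicator 1 ω - sᶜ.indicator 1 ω := by
    ext ω; by_cases h : ω ∈ s <;> simp [setSign, h]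
  rw [hsplit, integral_sub ((integrable_const 1).indicator hs)
    ((integrable_const 1).indicator hs.compl), integral_indicator_one hs,
    integral_indicator_one hs.compl]

lemma abs_weightedGap_le_one (hl : l ∈ Set.Icc (0 : ℝ) 1) (hx : x ∈ Set.Icc (0 : ℝ) 1)
    (hy : y ∈ Set.Icc (0 : ℝ) 1) : |weightedGap l x y| ≤ 1 := by
  obtain ⟨hl0, hl1⟩ := hl
  have hlx := mul_le_mul_of_nonneg_left hx.2 hl0
  have hly := mul_le_mul_of_nonneg_left hy.2 (sub_nonneg.mpr hl1)
  have hlx0 := mul_nonneg hl0 hx.1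
  have hly0 := mul_nonneg (sub_nonneg.mpr hl1) hy.1
  rw [weightedGap, abs_le]
  constructor <;> linarith

lemma sq_div_le_abs (a : ℝ) (σ : ℝ≥0) : a ^ 2 / (4 * (|a| + σ)) ≤ |a| := by
  rw [← sq_abs]
  exact div_le_of_le_mul₀ (by positivity) (abs_nonneg a)
    (by nlinarith [abs_nonneg a, mul_nonneg (abs_nonneg a) σ.coe_nonneg])

lemma le_integral_setSign_takeSet_mul (hS : S.Nonempty) (hv : v ≤ σ ^ 2 * S.card)
    (hl : l ∈ Set.Icc (0 : ℝ) 1) (hx : 0 ≤ x) (hy : 0 ≤ y) :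
    weightedGap l x y ^ 2 / (4 * (|weightedGap l x y| + σ)) ≤
      ∫ z, setSign (takeSet l) (batchMean S z) * weightedGap l x y ∂itemMeasure τ v x y := by
  rw [integral_mul_const]
  rcases eq_or_ne l 1 with rfl | hl1
  · refine (sq_div_le_abs _ σ).trans_eq ?_
    simp [setSign, takeSet, weightedGap, abs_of_nonneg hx]
  rcases eq_or_ne l 0 with rfl | hl0
  · refine (sq_div_le_abs _ σ).trans_eq ?_
    simp [setSign, takeSet, weightedGap, abs_of_nonneg hy]
  set gap : (Bool × Fin τ → ℝ) → ℝ :=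
    fun z => l * batchMean S z true + -(1 - l) * batchMean S z false with hgap
  have hlaw : HasLaw gap _ (itemMeasure τ v x y) := hasLaw_batchMean hS l (-(1 - l))
  have hvar : (‖l‖₊ ^ 2 + ‖-(1 - l)‖₊ ^ 2) * (v / S.card) ≤ σ ^ 2 := by
    have hweights : ‖l‖₊ ^ 2 + ‖-(1 - l)‖₊ ^ 2 ≤ 1 := by
      rw [← NNReal.coe_le_coe]
      simp only [NNReal.coe_add, NNReal.coe_pow, coe_nnnorm, norm_eq_abs, sq_abs, NNReal.coe_one]
      nlinarith [mul_nonneg hl.1 (sub_nonneg.mpr hl.2)]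
    exact (mul_le_of_le_one_left' hweights).trans
      (div_le_of_le_mul₀ zero_le zero_le hv)
  have hsign : ∀ z, setSign (takeSet l) (batchMean S z) = (setSign (Set.Ioi 0) ∘ gap) z := by
    intro z
    have hgap_eq : gap z = weightedGap l (batchMean S z true) (batchMean S z false) := by
      rw [hgap, weightedGap]; ring
    rw [Function.comp_apply, hgap_eq]
    simp [setSign, takeSet, hl1, hl0]
  have hmean : weightedGap l x y = l * x + -(1 - l) * y := by rw [weightedGap]; ring
  simp only [hsign]
  rw [hlaw.integral_comp (measurable_setSign measurableSet_Ioi).aestronglyMeasurable,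
    integral_setSign measurableSet_Ioi, Set.compl_Ioi, mul_comm (_ - _), hmean]
  exact le_mul_gaussianReal_Ioi_sub_Iic _ hvar

lemma hasSubgaussianMGF_setSign_mul_batchMean_sub (hST : Disjoint S T) (hT : T.Nonempty)
    (hv : v ≤ σ ^ 2 * T.card) (l : ℝ) (ν : Bool) :
    HasSubgaussianMGF (fun z => setSign (takeSet l) (batchMean S z) *
      (batchMean T z ν - if ν then x else y)) (σ ^ 2) (itemMeasure τ v x y) := by
  have hvar : v / T.card ≤ σ ^ 2 := div_le_of_le_mul₀ zero_le zero_le hv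
  have hmean : HasLaw (fun z => batchMean T z ν) (gaussianReal (if ν then x else y) (v / T.card))
      (itemMeasure τ v x y) := by
    cases ν
    · simpa using hasLaw_batchMean (x := x) (y := y) (v := v) hT 0 1
    · simpa using hasLaw_batchMean (x := x) (y := y) (v := v) hT 1 0
  have hnoise := gaussianReal_sub_const hmean (if ν then x else y)
  rw [sub_self] at hnoise
  refine hasSubgaussianMGF_mul_of_indepFun
    ((measurable_setSign (measurableSet_takeSet l)).comp (measurable_batchMean S))
    (fun z => (abs_setSign _ _).le) (hasSubgaussianMGF_of_hasLaw_gaussianReal hnoise hvar) ?_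
  exact (indepFun_batchMean hST).comp (φ := setSign (takeSet l))
    (ψ := fun e => e ν - if ν then x else y) (measurable_setSign (measurableSet_takeSet l))
    (by fun_prop)

end Item

section Candidate

section Curry

variable {α β E : Type*} [MeasurableSpace E]

@[fun_prop]
lemma measurable_curry_apply (i : α) :
    Measurable fun ω : α × β → E => Function.curry ω i := by
  unfold Function.curry; fun_prop

variable [Fintype α] [Fintype β] (ν : α × β → Measure E) [∀ p, IsProbabilityMeasure (ν p)]

lemma hasLaw_curry_pi (i : α) :
    HasLaw (fun ω => Function.curry ω i) (Measure.pi fun j => ν (i, j)) (Measure.pi ν) where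
  map_eq := by
    rw [← Measure.infinitePi_eq_pi, ← Measure.infinitePi_eq_pi]
    exact Measure.map_infinitePi_infinitePi_of_inj (Prod.mk_right_injective i)

lemma iIndepFun_curry_pi :
    iIndepFun (fun i (ω : α × β → E) => Function.curry ω i) (Measure.pi ν) := by
  rw [iIndepFun_iff_map_fun_eq_infinitePi_map (by fun_prop)]
  simp_rw [(hasLaw_curry_pi ν _).map_eq, ← Measure.infinitePi_eq_pi]
  exact Measure.infinitePi_map_curry fun i j => ν (i, j)

end Curry

variable {m τ : ℕ} {v σ : ℝ≥0} {μa μb w : Fin m → ℝ} {S T : Finset (Fin τ)}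

instance : IsProbabilityMeasure (obsMeasure m τ v μa μb) := by
  unfold obsMeasure; infer_instance

lemma hasLaw_curry_obsMeasure (i : Fin m) :
    HasLaw (fun ω => Function.curry ω i) (itemMeasure τ v (μa i) (μb i))
      (obsMeasure m τ v μa μb) :=
  hasLaw_curry_pi
    (fun p : Fin m × Bool × Fin τ => gaussianReal (if p.2.1 then μa p.1 else μb p.1) v) i

lemma iIndepFun_curry_obsMeasure :
    iIndepFun (fun i (ω : Fin m × Bool × Fin τ → ℝ) => Function.curry ω i)
      (obsMeasure m τ v μa μb) :=
  iIndepFun_curry_pi fun p : Fin m × Bool × Fin τ =>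
    gaussianReal (if p.2.1 then μa p.1 else μb p.1) v

/-- The allocation computed from the batch `S` of repetitions that gives item `i` to agent `a` when
its empirical gap, for the weight `w i`, is positive. -/
def candidate (S : Finset (Fin τ)) (w : Fin m → ℝ) (ω : Fin m × Bool × Fin τ → ℝ) :
    Finset (Fin m) :=
  {i | batchMean S (Function.curry ω i) ∈ takeSet (w i)}

/-- The empirical utilities of agent `ν` computed from the batch `T` of repetitions. -/
def empiricalUtility (T : Finset (Fin τ)) (ν : Bool) (ω : Fin m × Bool × Fin τ → ℝ) (i : Fin m) :
    ℝ :=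
  batchMean T (Function.curry ω i) ν

/-- A lower bound for the expected gain of a candidate allocation of `m` items when the gaps of the
items have total size at least `D` and are estimated with standard deviation `σ`. -/
def gainBound (m : ℕ) (σ : ℝ≥0) (D : ℝ) : ℝ := D ^ 2 / (4 * (D + m * σ))

lemma envyBA_candidate (x : Fin m → ℝ) (ω : Fin m × Bool × Fin τ → ℝ) :
    envyBA x (candidate S w ω) =
      ∑ i, setSign (takeSet (w i)) (batchMean S (Function.curry ω i)) * x i := by
  simp [envyBA_eq_sum_setSign, setSign, candidate]

lemma gainBound_le_sum_sq_div (hσ : 0 < σ) (g : Fin m → ℝ) {D : ℝ} (hD : 0 ≤ D)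
    (hg : D ≤ ∑ i, |g i|) :
    gainBound m σ D ≤ ∑ i, g i ^ 2 / (4 * (|g i| + σ)) := by
  have : (0 : ℝ) < σ := hσ
  set B := ∑ i, |g i| with hB
  have hdenom : ∑ i, 4 * (|g i| + σ) = 4 * (B + m * σ) := by
    simp [← Finset.mul_sum, Finset.sum_add_distrib, hB]
  have hmono : gainBound m σ D ≤ B ^ 2 / (4 * (B + m * σ)) := by
    rcases hD.eq_or_lt with rfl | hD0
    · simp only [gainBound, ne_eq, OfNat.ofNat_ne_zero, not_false_eq_true, zero_pow, zero_div]
      positivity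
    · have hB0 : 0 < B := hD0.trans_le hg
      have hms : 0 ≤ (m : ℝ) * σ := by positivity
      rw [gainBound, div_le_div_iff₀ (by positivity) (by positivity)]
      nlinarith [mul_nonneg hD hms, mul_nonneg (mul_nonneg hD (hD.trans hg)) (sub_nonneg.mpr hg),
        mul_nonneg hms (mul_nonneg (sub_nonneg.mpr hg) (add_nonneg hD (hD.trans hg)))]
  refine hmono.trans ?_
  rw [← hdenom, hB]
  refine (Finset.sq_sum_div_le_sum_sq_div _ _ fun i _ => by positivity).trans_eq ?_
  simp only [sq_abs]

lemma measureReal_envyBA_candidate_le (hσ : 0 < σ) (hS : S.Nonempty) (hv : v ≤ σ ^ 2 * S.card)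
    (ha : ∀ i, μa i ∈ Set.Icc (0 : ℝ) 1) (hb : ∀ i, μb i ∈ Set.Icc (0 : ℝ) 1)
    (hw : ∀ i, w i ∈ Set.Icc (0 : ℝ) 1) {D : ℝ} (hD : 0 ≤ D)
    (hsum : D ≤ ∑ i, |weightedGap (w i) (μa i) (μb i)|) :
    (obsMeasure m τ v μa μb).real {ω | envyBA (fun i => weightedGap (w i) (μa i) (μb i))
      (candidate S w ω) ≤ gainBound m σ D / 2} ≤
    rexp (-gainBound m σ D / (32 * (1 + σ))) := by
  set g : Fin m → ℝ := fun i => weightedGap (w i) (μa i) (μb i)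
  set F : Fin m → (Bool × Fin τ → ℝ) → ℝ :=
    fun i z => setSign (takeSet (w i)) (batchMean S z) * g i
  have hFmeas : ∀ i, Measurable (F i) := fun i =>
    ((measurable_setSign (measurableSet_takeSet (w i))).comp
      (measurable_batchMean S)).mul_const _
  set X : Fin m → (Fin m × Bool × Fin τ → ℝ) → ℝ := fun i ω => F i (Function.curry ω i)
  have hmean : ∀ i, g i ^ 2 / (4 * (|g i| + σ)) ≤ ∫ ω, X i ω ∂obsMeasure m τ v μa μb := fun i =>
    (le_integral_setSign_takeSet_mul hS hv (hw i) (ha i).1 (hb i).1).trans_eq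
      ((hasLaw_curry_obsMeasure i).integral_comp (hFmeas i).aestronglyMeasurable).symm
  have htotal := (gainBound_le_sum_sq_div hσ g hD hsum).trans
    (Finset.sum_le_sum fun i _ => hmean i)
  have hsq : ∀ i ω, X i ω ^ 2 ≤ 4 * (1 + σ) * ∫ ω, X i ω ∂obsMeasure m τ v μa μb := by
    intro i ω
    have hg := abs_weightedGap_le_one (hw i) (ha i) (hb i)
    have hle : g i ^ 2 / (4 * (1 + σ)) ≤ ∫ ω, X i ω ∂obsMeasure m τ v μa μb :=
      (div_le_div_of_nonneg_left (sq_nonneg _) (by positivity) (by gcongr)).trans (hmean i)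
    rw [← sq_abs, abs_mul, abs_setSign, one_mul, sq_abs]
    exact (div_le_iff₀' (by positivity)).mp hle
  have htail := measureReal_sum_le_half_le_exp
    (iIndepFun_curry_obsMeasure.comp F hFmeas) (fun i => (hFmeas i).comp (measurable_curry_apply i))
    (by positivity) hsq
  refine (measureReal_mono fun ω hω => ?_).trans (htail.trans (exp_le_exp.mpr ?_))
  · rw [Set.mem_ofPred_eq, envyBA_candidate] at hω
    exact hω.trans (by gcongr; exact htotal)
  · rw [← mul_assoc, show (8 : ℝ) * 4 = 32 by norm_num]
    gcongr
    exact htotal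

lemma measureReal_le_abs_envyBA_candidate_le (hT : T.Nonempty) (hST : Disjoint S T)
    (hv : v ≤ σ ^ 2 * T.card) (w : Fin m → ℝ) (ν : Bool) {η : ℝ} (hη : 0 ≤ η) :
    (obsMeasure m τ v μa μb).real {ω | η ≤ |envyBA
      (empiricalUtility T ν ω - if ν then μa else μb) (candidate S w ω)|} ≤
    2 * rexp (-η ^ 2 / (2 * (m * σ ^ 2))) := by
  set F : Fin m → (Bool × Fin τ → ℝ) → ℝ := fun i z => setSign (takeSet (w i)) (batchMean S z) *
    (batchMean T z ν - if ν then μa i else μb i)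
  have hFmeas : ∀ i, Measurable (F i) := fun i =>
    ((measurable_setSign (measurableSet_takeSet (w i))).comp (measurable_batchMean S)).mul
      (by fun_prop)
  have hindep := (iIndepFun_curry_obsMeasure (v := v) (μa := μa) (μb := μb)).comp F hFmeas
  have hsub : ∀ i ∈ Finset.univ, HasSubgaussianMGF (F i ∘ fun ω => Function.curry ω i) (σ ^ 2)
      (obsMeasure m τ v μa μb) := by
    intro i _
    have hlaw := hasLaw_curry_obsMeasure (τ := τ) (v := v) (μa := μa) (μb := μb) i
    have h := hasSubgaussianMGF_setSign_mul_batchMean_sub (x := μa i) (y := μb i) hST hT hv (w i) ν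
    exact HasSubgaussianMGF.of_map hlaw.aemeasurable (hlaw.map_eq ▸ h)
  have hsum := HasSubgaussianMGF.sum_of_iIndepFun hindep hsub
  have hnoise : ∀ ω, envyBA (empiricalUtility T ν ω - if ν then μa else μb) (candidate S w ω) =
      ∑ i, (F i ∘ fun ω => Function.curry ω i) ω := by
    intro ω
    rw [envyBA_candidate]
    cases ν <;> rfl
  have hsplit : {ω | η ≤ |envyBA (empiricalUtility T ν ω - if ν then μa else μb)
      (candidate S w ω)|} ⊆
      {ω | η ≤ ∑ i, (F i ∘ fun ω => Function.curry ω i) ω} ∪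
        {ω | η ≤ -∑ i, (F i ∘ fun ω => Function.curry ω i) ω} := fun ω hω => by
    rw [Set.mem_ofPred_eq, hnoise] at hω
    exact le_abs.mp hω
  refine (measureReal_mono hsplit).trans ((measureReal_union_le _ _).trans ?_)
  have hvar : ((∑ _i : Fin m, σ ^ 2 : ℝ≥0) : ℝ) = m * σ ^ 2 := by simp
  have hupper := hsum.measure_ge_le hη
  have hlower := hsum.neg.measure_ge_le hη
  rw [hvar] at hupper hlower
  exact (add_le_add hupper hlower).trans_eq (two_mul _).symm

end Candidate

section Rule

variable {m τ : ℕ} {v σ : ℝ≥0} {μa μb w : Fin m → ℝ} {S T : Finset (Fin τ)} {θ : ℝ}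

/-- The certificate of envy-freeness for the candidate with weights `w`: its envy, for the
utilities estimated from the fresh batch `T`, is at most `-θ`. -/
def Accepted (S T : Finset (Fin τ)) (θ : ℝ) (w : Fin m → ℝ) (ω : Fin m × Bool × Fin τ → ℝ) : Prop :=
  envy (empiricalUtility T true ω) (empiricalUtility T false ω) (candidate S w ω) ≤ -θ

lemma exists_sq_lt_or_accepted (S T : Finset (Fin τ)) (θ : ℝ) (ω : Fin m × Bool × Fin τ → ℝ) :
    ∃ n, m ^ 2 < n ∨ Accepted S T θ (pathWeight m n) ω :=
  ⟨m ^ 2 + 1, Or.inl (Nat.lt_succ_self _)⟩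

/-- The first step of the interpolation path whose candidate is accepted, or `m ^ 2 + 1` if there is
none. -/
def firstAccepted (S T : Finset (Fin τ)) (θ : ℝ) (ω : Fin m × Bool × Fin τ → ℝ) : ℕ :=
  Nat.find (exists_sq_lt_or_accepted S T θ ω)

/-- The allocation rule: output the first accepted candidate along the interpolation path. -/
def pathRule (S T : Finset (Fin τ)) (θ : ℝ) (ω : Fin m × Bool × Fin τ → ℝ) : Finset (Fin m) :=
  candidate S (pathWeight m (firstAccepted S T θ ω)) ω

lemma measurable_setSign_batchMean (S : Finset (Fin τ)) (w : Fin m → ℝ) (i : Fin m) :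
    Measurable fun ω : Fin m × Bool × Fin τ → ℝ =>
      setSign (takeSet (w i)) (batchMean S (Function.curry ω i)) :=
  (measurable_setSign (measurableSet_takeSet (w i))).comp
    ((measurable_batchMean S).comp (measurable_curry_apply i))

lemma measurableSet_candidate_eq (S : Finset (Fin τ)) (w : Fin m → ℝ) (A : Finset (Fin m)) :
    MeasurableSet {ω | candidate S w ω = A} := by
  simp only [Finset.ext_iff, candidate, Finset.mem_filter_univ]
  exact measurableSet_setOfPred.mpr (.forall fun i => .iff ((measurableSet_takeSet (w i)).mem.comp
    ((measurable_batchMean S).comp (measurable_curry_apply i))) measurable_const)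

lemma measurableSet_accepted (S T : Finset (Fin τ)) (θ : ℝ) (w : Fin m → ℝ) :
    MeasurableSet {ω | Accepted S T θ w ω} := by
  have hmean : ∀ ν, Measurable fun ω => envyBA (empiricalUtility T ν ω) (candidate S w ω) := by
    intro ν
    simp only [envyBA_candidate, empiricalUtility]
    exact Finset.measurable_fun_sum _ fun i _ =>
      (measurable_setSign_batchMean S w i).mul (by fun_prop)
  simp only [Accepted, envy, envyAB_eq_neg_envyBA]
  exact measurableSet_le ((hmean true).neg.max (hmean false)) measurable_const

lemma measurableSet_pathRule_eq (S T : Finset (Fin τ)) (θ : ℝ) (A : Finset (Fin m)) :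
    MeasurableSet {ω | pathRule S T θ ω = A} := by
  have hstep : Measurable fun ω : Fin m × Bool × Fin τ → ℝ => firstAccepted S T θ ω :=
    measurable_find (exists_sq_lt_or_accepted S T θ) fun n =>
      (MeasurableSet.const _).union (measurableSet_accepted S T θ (pathWeight m n))
  have hsplit : {ω | pathRule S T θ ω = A} = ⋃ n,
      {ω | firstAccepted S T θ ω = n} ∩ {ω | candidate S (pathWeight m n) ω = A} := by
    ext ω; simp [pathRule]
  rw [hsplit]
  exact .iUnion fun n =>
    (hstep (measurableSet_singleton n)).inter (measurableSet_candidate_eq S _ A)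

lemma accepted_firstAccepted {ω : Fin m × Bool × Fin τ → ℝ} {n : ℕ} (hn : n ≤ m ^ 2)
    (h : Accepted S T θ (pathWeight m n) ω) :
    firstAccepted S T θ ω ≤ m ^ 2 ∧ Accepted S T θ (pathWeight m (firstAccepted S T θ ω)) ω := by
  have hle : firstAccepted S T θ ω ≤ m ^ 2 := (Nat.find_min' _ (Or.inr h)).trans hn
  exact ⟨hle, (Nat.find_spec (exists_sq_lt_or_accepted S T θ ω)).resolve_left (not_lt.mpr hle)⟩

lemma candidate_pathWeight_zero (ω : Fin m × Bool × Fin τ → ℝ) :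
    candidate S (pathWeight m 0) ω = ∅ := by
  simp [candidate, takeSet, pathWeight_zero]

lemma candidate_pathWeight_sq (ω : Fin m × Bool × Fin τ → ℝ) :
    candidate S (pathWeight m (m ^ 2)) ω = Finset.univ := by
  simp [candidate, takeSet, pathWeight_sq]

lemma exists_mem_candidate_succ_iff_of_ne (hm : 0 < m) (n : ℕ) (ω : Fin m × Bool × Fin τ → ℝ) :
    ∃ j, ∀ i ≠ j,
      i ∈ candidate S (pathWeight m (n + 1)) ω ↔ i ∈ candidate S (pathWeight m n) ω := by
  obtain ⟨j, hj⟩ := exists_pathWeight_succ_eq_of_ne hm n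
  exact ⟨j, fun i hi => by simp only [candidate, Finset.mem_filter_univ, hj i hi]⟩

lemma envy_pathRule_nonpos (hm : 0 < m) (ha : ∀ i, μa i ∈ Set.Icc (0 : ℝ) 1)
    (hb : ∀ i, μb i ∈ Set.Icc (0 : ℝ) 1) {ω : Fin m × Bool × Fin τ → ℝ}
    (h_gain : ∀ n ≤ m ^ 2, 6 + 2 * θ ≤ envyBA
      (fun i => weightedGap (pathWeight m n i) (μa i) (μb i)) (candidate S (pathWeight m n) ω))
    (h_noise : ∀ n ≤ m ^ 2, ∀ ν : Bool, |envyBA (empiricalUtility T ν ω - if ν then μa else μb)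
      (candidate S (pathWeight m n) ω)| ≤ θ) :
    envy μa μb (pathRule S T θ ω) ≤ 0 := by
  obtain ⟨n, hn, hpath⟩ := exists_envy_le_of_path ha hb
    (candidate_pathWeight_zero (S := S) ω) (candidate_pathWeight_sq ω)
    (fun n => exists_mem_candidate_succ_iff_of_ne hm n ω) h_gain
  have haccept : Accepted S T θ (pathWeight m n) ω := by
    refine (envy_le_envy_add (h_noise n hn true) (h_noise n hn false)).trans ?_
    simp only [if_true, Bool.false_eq_true, if_false]
    linarith
  obtain ⟨hle, hfirst⟩ := accepted_firstAccepted hn haccept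
  have htrue := h_noise _ hle true
  have hfalse := h_noise _ hle false
  simp only [envyBA_sub, if_true, Bool.false_eq_true, if_false] at htrue hfalse
  rw [abs_sub_comm, ← envyBA_sub] at htrue hfalse
  have hback := envy_le_envy_add htrue hfalse
  rw [Accepted] at hfirst
  rw [pathRule]
  linarith

/-- The event that the candidate with weights `w` is unreliable: its weighted gain is at most `γ`,
or the fresh batch `T` misestimates one of the two utility differences by at least `η`. -/
def unreliable (S T : Finset (Fin τ)) (μa μb w : Fin m → ℝ) (γ η : ℝ) :
    Set (Fin m × Bool × Fin τ → ℝ) :=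
  {ω | envyBA (fun i => weightedGap (w i) (μa i) (μb i)) (candidate S w ω) ≤ γ} ∪
    ⋃ ν : Bool, {ω | η ≤ |envyBA (empiricalUtility T ν ω - if ν then μa else μb)
      (candidate S w ω)|}

lemma setOf_envy_pathRule_pos_subset (hm : 0 < m) (ha : ∀ i, μa i ∈ Set.Icc (0 : ℝ) 1)
    (hb : ∀ i, μb i ∈ Set.Icc (0 : ℝ) 1) :
    {ω | 0 < envy μa μb (pathRule S T θ ω)} ⊆
      ⋃ n ∈ Finset.range (m ^ 2 + 1), unreliable S T μa μb (pathWeight m n) (6 + 2 * θ) θ := by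
  intro ω hω
  contrapose! hω
  simp only [unreliable, Set.mem_iUnion, Finset.mem_range, Order.lt_add_one_iff, Set.mem_union,
    not_exists, not_or, Set.mem_ofPred_eq, not_le, not_lt] at hω ⊢
  exact envy_pathRule_nonpos hm ha hb (fun n hn => (hω n hn).1.le)
    fun n hn ν => ((hω n hn).2 ν).le

lemma measureReal_unreliable_le (hσ : 0 < σ) (hS : S.Nonempty)
    (hT : T.Nonempty) (hST : Disjoint S T) (hvS : v ≤ σ ^ 2 * S.card) (hvT : v ≤ σ ^ 2 * T.card)
    (ha : ∀ i, μa i ∈ Set.Icc (0 : ℝ) 1) (hb : ∀ i, μb i ∈ Set.Icc (0 : ℝ) 1)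
    (hw : ∀ i, w i ∈ Set.Icc (0 : ℝ) 1) {D η γ : ℝ} (hD : 0 ≤ D)
    (hsum : D ≤ ∑ i, |weightedGap (w i) (μa i) (μb i)|) (hη : 0 ≤ η)
    (hγ : γ ≤ gainBound m σ D / 2) :
    (obsMeasure m τ v μa μb).real (unreliable S T μa μb w γ η) ≤
      rexp (-gainBound m σ D / (32 * (1 + σ))) + 4 * rexp (-η ^ 2 / (2 * (m * σ ^ 2))) := by
  refine (measureReal_union_le _ _).trans (add_le_add ?_ ?_)
  · exact (measureReal_mono fun ω hω => le_trans hω hγ).trans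
      (measureReal_envyBA_candidate_le hσ hS hvS ha hb hw hD hsum)
  · refine (measureReal_iUnion_fintype_le _).trans ((Finset.sum_le_card_nsmul _ _ _
      fun ν _ => measureReal_le_abs_envyBA_candidate_le hT hST hvT w ν hη).trans_eq ?_)
    rw [Finset.card_univ, Fintype.card_bool, nsmul_eq_mul]
    push_cast
    ring

lemma measureReal_envy_pathRule_pos_le (hm : 0 < m) (hσ : 0 < σ) (hS : S.Nonempty)
    (hT : T.Nonempty) (hST : Disjoint S T) (hvS : v ≤ σ ^ 2 * S.card) (hvT : v ≤ σ ^ 2 * T.card)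
    (ha : ∀ i, μa i ∈ Set.Icc (0 : ℝ) 1) (hb : ∀ i, μb i ∈ Set.Icc (0 : ℝ) 1) {D : ℝ} (hD : 0 ≤ D)
    (hopt : optEnvy μa μb ≤ -(D + 2)) (hG : 24 ≤ gainBound m σ D) :
    (obsMeasure m τ v μa μb).real {ω | 0 < envy μa μb (pathRule S T (gainBound m σ D / 8) ω)} ≤
      (m ^ 2 + 1) * (rexp (-gainBound m σ D / (32 * (1 + σ))) +
        4 * rexp (-(gainBound m σ D / 8) ^ 2 / (2 * (m * σ ^ 2)))) := by
  set G := gainBound m σ D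
  have hstep : ∀ n ∈ Finset.range (m ^ 2 + 1), (obsMeasure m τ v μa μb).real
      (unreliable S T μa μb (pathWeight m n) (6 + 2 * (G / 8)) (G / 8)) ≤
      rexp (-G / (32 * (1 + σ))) + 4 * rexp (-(G / 8) ^ 2 / (2 * (m * σ ^ 2))) := by
    intro n hn
    have hn' : n ≤ m ^ 2 := Nat.lt_succ_iff.mp (Finset.mem_range.mp hn)
    have hsum := le_sum_abs_weightedGap ha hb (div_sq_mem_Icc hn')
      fun i => abs_pathWeight_sub_le n i
    exact measureReal_unreliable_le hσ hS hT hST hvS hvT ha hb (pathWeight_mem_Icc hn') hD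
      (by linarith) (by linarith) (by linarith)
  refine (measureReal_mono (setOf_envy_pathRule_pos_subset hm ha hb) (measure_ne_top _ _)).trans
    ((measureReal_biUnion_finset_le _ _).trans
      ((Finset.sum_le_card_nsmul _ _ _ hstep).trans_eq ?_))
  rw [Finset.card_range, nsmul_eq_mul]
  push_cast
  rfl

end Rule

section Asymptotics

open Asymptotics

lemma tendsto_log_natCast_atTop : Tendsto (fun m : ℕ => log m) atTop atTop :=
  tendsto_log_atTop.comp tendsto_natCast_atTop_atTop

lemma rpow_quarter_sq (m : ℕ) : ((m : ℝ) ^ ((1 : ℝ) / 4)) ^ 2 = √m := by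
  rw [← rpow_natCast, ← rpow_mul m.cast_nonneg, sqrt_eq_rpow]
  norm_num

lemma eventually_sqrt_log_le_rpow_quarter :
    ∀ᶠ m : ℕ in atTop, √(log m) ≤ (m : ℝ) ^ ((1 : ℝ) / 4) := by
  have hlog := ((isLittleO_log_rpow_atTop (by norm_num : (0 : ℝ) < 1 / 2)).comp_tendsto
    tendsto_natCast_atTop_atTop).bound one_pos
  filter_upwards [hlog] with m hm
  refine sqrt_le_iff.mpr ⟨by positivity, ?_⟩
  rw [rpow_quarter_sq, sqrt_eq_rpow]
  simpa [abs_of_nonneg (rpow_nonneg (m.cast_nonneg (α := ℝ)) _)] using (le_abs_self _).trans hm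

lemma le_gainBound {m : ℕ} {σ : ℝ≥0} {d q s C : ℝ} (hd : 4 ≤ d) (hs : 0 < s) (hsq : s ≤ q)
    (hC : 0 ≤ C) (hσ : m * σ ≤ C * (d * q / s)) :
    d * s / q ≤ 16 * (1 + C) * gainBound m σ (d - 2) := by
  have hq : 0 < q := hs.trans_le hsq
  have hdq : d ≤ d * q / s := by
    rw [le_div_iff₀ hs]; gcongr
  have hdenom : d - 2 + m * σ ≤ (1 + C) * (d * q / s) := by linarith
  have hdenom_pos : 0 < d - 2 + m * σ := by
    have : 0 ≤ (m : ℝ) * σ := by positivity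
    linarith
  have hsq_le : d ^ 2 / 4 ≤ (d - 2) ^ 2 := by nlinarith
  calc d * s / q = 16 * (1 + C) * (d ^ 2 / 4 / (4 * ((1 + C) * (d * q / s)))) := by
        field_simp; norm_num
    _ ≤ 16 * (1 + C) * gainBound m σ (d - 2) := by
        unfold gainBound; gcongr

variable {Δ : ℕ → ℝ} {σ : ℕ → ℝ≥0}

lemma eventually_le_of_tendsto_div
    (hΔ : Tendsto (fun m : ℕ => Δ m / ((m : ℝ) ^ ((1 : ℝ) / 4) * √(log m))) atTop atTop) (c : ℝ) :
    ∀ᶠ m in atTop, c ≤ Δ m := by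
  filter_upwards [hΔ.eventually_ge_atTop |c|, eventually_ge_atTop 1,
    tendsto_log_natCast_atTop.eventually_ge_atTop 1] with m hm hm1 hlog
  have hpos : 1 ≤ (m : ℝ) ^ ((1 : ℝ) / 4) * √(log m) := one_le_mul_of_one_le_of_one_le
    (one_le_rpow (by exact_mod_cast hm1) (by norm_num)) (one_le_sqrt.mpr hlog)
  rw [le_div_iff₀ (by linarith)] at hm
  exact (le_abs_self c).trans ((le_mul_of_one_le_right (abs_nonneg c) hpos).trans hm)

lemma isBigO_gainBound
    (hΔ : Tendsto (fun m : ℕ => Δ m / ((m : ℝ) ^ ((1 : ℝ) / 4) * √(log m))) atTop atTop)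
    (hσ : (fun m : ℕ => m * (σ m : ℝ)) =O[atTop]
      fun m : ℕ => Δ m * (m : ℝ) ^ ((1 : ℝ) / 4) / √(log m)) :
    (fun m : ℕ => Δ m * √(log m) / (m : ℝ) ^ ((1 : ℝ) / 4)) =O[atTop]
      fun m => gainBound m (σ m) (Δ m - 2) := by
  obtain ⟨C, hC, hbound⟩ := hσ.exists_pos
  refine .of_bound (16 * (1 + C)) ?_
  filter_upwards [hbound.bound, eventually_le_of_tendsto_div hΔ 4,
    eventually_sqrt_log_le_rpow_quarter, tendsto_log_natCast_atTop.eventually_gt_atTop 0]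
    with m hm hΔm hq hlog
  rw [norm_of_nonneg (by positivity), norm_of_nonneg (by positivity)] at hm
  rw [norm_of_nonneg (by positivity)]
  refine (le_gainBound hΔm (sqrt_pos.mpr hlog) hq hC.le hm).trans ?_
  gcongr
  exact le_norm_self _

lemma tendsto_gainBound_div_log
    (hΔ : Tendsto (fun m : ℕ => Δ m / ((m : ℝ) ^ ((1 : ℝ) / 4) * √(log m))) atTop atTop)
    (hσ : (fun m : ℕ => m * (σ m : ℝ)) =O[atTop]
      fun m : ℕ => Δ m * (m : ℝ) ^ ((1 : ℝ) / 4) / √(log m)) :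
    Tendsto (fun m : ℕ => gainBound m (σ m) (Δ m - 2) / log m) atTop atTop := by
  obtain ⟨C, hC, hbound⟩ := (isBigO_gainBound hΔ hσ).exists_pos
  refine tendsto_atTop_mono' _ ?_ (hΔ.atTop_div_const hC)
  filter_upwards [hbound.bound, eventually_le_of_tendsto_div hΔ 2,
    tendsto_log_natCast_atTop.eventually_gt_atTop 0] with m hm hΔm hlog
  have hG : 0 ≤ gainBound m (σ m) (Δ m - 2) := by
    have := sub_nonneg.mpr hΔm
    unfold gainBound; positivity
  rw [norm_of_nonneg (by positivity), norm_of_nonneg hG] at hm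
  rw [div_le_div_iff₀ hC hlog, mul_comm _ C]
  have := sqrt_pos.mpr hlog
  refine le_of_eq_of_le ?_ hm
  field_simp
  rw [sq_sqrt hlog.le]

lemma tendsto_gainBound_sq_div_div_log (hσ_pos : ∀ᶠ m in atTop, 0 < σ m)
    (hΔ : Tendsto (fun m : ℕ => Δ m / ((m : ℝ) ^ ((1 : ℝ) / 4) * √(log m))) atTop atTop)
    (hσ : (fun m : ℕ => m * (σ m : ℝ)) =O[atTop]
      fun m : ℕ => Δ m * (m : ℝ) ^ ((1 : ℝ) / 4) / √(log m)) :
    Tendsto (fun m : ℕ => gainBound m (σ m) (Δ m - 2) ^ 2 / (m * (σ m : ℝ) ^ 2) / log m)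
      atTop atTop := by
  have hfactor : (fun m : ℕ => Δ m * (m : ℝ) ^ ((1 : ℝ) / 4) / √(log m) * log m) =ᶠ[atTop]
      fun m : ℕ => Δ m * √(log m) / (m : ℝ) ^ ((1 : ℝ) / 4) * √m := by
    filter_upwards [eventually_gt_atTop 0, tendsto_log_natCast_atTop.eventually_gt_atTop 0]
      with m hm hlog
    have := sqrt_pos.mpr hlog
    rw [← rpow_quarter_sq]
    field_simp
    rw [sq_sqrt hlog.le]
  obtain ⟨C, hC, hbound⟩ := ((hσ.mul (isBigO_refl _ _)).trans_eventuallyEq hfactor |>.trans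
    ((isBigO_gainBound hΔ hσ).mul (isBigO_refl _ _))).exists_pos
  refine tendsto_atTop_mono' _ ?_ (tendsto_log_natCast_atTop.atTop_div_const (pow_pos hC 2))
  filter_upwards [hbound.bound, hσ_pos, eventually_gt_atTop 0,
    tendsto_log_natCast_atTop.eventually_gt_atTop 0] with m hm hσm hm0 hlog
  have hm0' : (0 : ℝ) < m := by exact_mod_cast hm0
  have hsq := pow_le_pow_left₀ (norm_nonneg _) hm 2
  simp only [norm_eq_abs, mul_pow, sq_abs, sq_sqrt hm0'.le] at hsq
  have : (0 : ℝ) < σ m := hσm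
  rw [div_div, div_le_div_iff₀ (by positivity) (by positivity)]
  nlinarith

lemma tendsto_failureBound (hσ_pos : ∀ᶠ m in atTop, 0 < σ m) {s : ℝ≥0}
    (hσ_le : ∀ᶠ m in atTop, σ m ≤ s)
    (hΔ : Tendsto (fun m : ℕ => Δ m / ((m : ℝ) ^ ((1 : ℝ) / 4) * √(log m))) atTop atTop)
    (hσ : (fun m : ℕ => m * (σ m : ℝ)) =O[atTop]
      fun m : ℕ => Δ m * (m : ℝ) ^ ((1 : ℝ) / 4) / √(log m)) :
    Tendsto (fun m : ℕ => ((m : ℝ) ^ 2 + 1) *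
      (rexp (-gainBound m (σ m) (Δ m - 2) / (32 * (1 + σ m))) +
        4 * rexp (-(gainBound m (σ m) (Δ m - 2) / 8) ^ 2 / (2 * (m * (σ m : ℝ) ^ 2)))))
      atTop (nhds 0) := by
  have hlim : Tendsto (fun m : ℕ => 10 * (m : ℝ)⁻¹) atTop (nhds 0) := by
    simpa using tendsto_inv_atTop_nhds_zero_nat.const_mul (10 : ℝ)
  refine squeeze_zero' (.of_forall fun m => by positivity) ?_ hlim
  filter_upwards [(tendsto_gainBound_div_log hΔ hσ).eventually_ge_atTop (96 * (1 + s)),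
    (tendsto_gainBound_sq_div_div_log hσ_pos hΔ hσ).eventually_ge_atTop 384, hσ_le, hσ_pos,
    eventually_gt_atTop 0, tendsto_log_natCast_atTop.eventually_gt_atTop 0]
    with m hgain hnoise hs hσm hm hlog
  have hm1 : (1 : ℝ) ≤ m := by exact_mod_cast hm
  have hσm' : (0 : ℝ) < σ m := hσm
  have hs' : (σ m : ℝ) ≤ s := hs
  rw [le_div_iff₀ hlog] at hgain hnoise
  have hexp : rexp (-(3 * log m)) = ((m : ℝ) ^ 3)⁻¹ := by
    rw [exp_neg, ← rpow_natCast, rpow_def_of_pos (by positivity), mul_comm]; norm_num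
  have hgain' : rexp (-gainBound m (σ m) (Δ m - 2) / (32 * (1 + σ m))) ≤ ((m : ℝ) ^ 3)⁻¹ := by
    rw [← hexp, neg_div, exp_le_exp, neg_le_neg_iff, le_div_iff₀ (by positivity)]
    nlinarith
  have hnoise' : rexp (-(gainBound m (σ m) (Δ m - 2) / 8) ^ 2 / (2 * (m * (σ m : ℝ) ^ 2))) ≤
      ((m : ℝ) ^ 3)⁻¹ := by
    rw [← hexp, neg_div, exp_le_exp, neg_le_neg_iff]
    refine le_of_le_of_eq (b := gainBound m (σ m) (Δ m - 2) ^ 2 / (m * (σ m : ℝ) ^ 2) / 128)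
      (by linarith) ?_
    field_simp; ring
  calc _ ≤ ((m : ℝ) ^ 2 + 1) * (((m : ℝ) ^ 3)⁻¹ + 4 * ((m : ℝ) ^ 3)⁻¹) := by gcongr
    _ ≤ (2 * (m : ℝ) ^ 2) * (((m : ℝ) ^ 3)⁻¹ + 4 * ((m : ℝ) ^ 3)⁻¹) := by gcongr; nlinarith
    _ = 10 * (m : ℝ)⁻¹ := by field_simp; norm_num

end Asymptotics

section Main

open Asymptotics

lemma one_sub_measureReal_compl_le {Ω : Type*} [MeasurableSpace Ω] {μ : Measure Ω}
    [IsProbabilityMeasure μ] (s : Set Ω) : 1 - μ.real sᶜ ≤ μ.real s := by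
  rw [sub_le_iff_le_add, ← probReal_univ (μ := μ), ← Set.union_compl_self s]
  exact measureReal_union_le s sᶜ

lemma tendsto_ciInf_of_le {α : Type*} {l : Filter α} {ι : α → Type*} {f : ∀ a, ι a → ℝ}
    {g : α → ℝ} {c : ℝ} (hne : ∀ᶠ a in l, Nonempty (ι a)) (hg : Tendsto g l (nhds c))
    (hgf : ∀ᶠ a in l, ∀ i, g a ≤ f a i) (hfc : ∀ a i, f a i ≤ c) :
    Tendsto (fun a => ⨅ i, f a i) l (nhds c) := by
  refine tendsto_of_tendsto_of_tendsto_of_le_of_le' hg tendsto_const_nhds ?_ ?_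
  · filter_upwards [hne, hgf] with a _ ha
    exact le_ciInf ha
  · filter_upwards [hne, hgf] with a ⟨i⟩ ha
    exact (ciInf_le ⟨g a, Set.forall_mem_range.mpr ha⟩ i).trans (hfc a i)

lemma exists_optEnvy_le {m : ℕ} {D : ℝ} (hD : D ≤ (m / 2 : ℕ)) :
    ∃ p : (Fin m → ℝ) × (Fin m → ℝ), (∀ i, p.1 i ∈ Set.Icc (0 : ℝ) 1) ∧
      (∀ i, p.2 i ∈ Set.Icc (0 : ℝ) 1) ∧ optEnvy p.1 p.2 ≤ -D := by
  obtain ⟨A, -, hA⟩ := Finset.exists_subset_card_eq (s := (Finset.univ : Finset (Fin m)))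
    (n := m / 2) ((Nat.div_le_self m 2).trans_eq (Finset.card_fin m).symm)
  have hmem : ∀ (s : Set (Fin m)) (i : Fin m), s.indicator 1 i ∈ Set.Icc (0 : ℝ) 1 :=
    fun s i => ⟨Set.indicator_nonneg (fun _ _ => zero_le_one) i,
      Set.indicator_le_self' (fun _ _ => zero_le_one) i⟩
  have hAc : ((m / 2 : ℕ) : ℝ) ≤ Aᶜ.card := by
    rw [Finset.card_compl, hA, Fintype.card_fin]
    exact_mod_cast (by omega : m / 2 ≤ m - m / 2)
  refine ⟨((A : Set (Fin m)).indicator 1, ((Aᶜ : Finset (Fin m)) : Set (Fin m)).indicator 1),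
    hmem _, hmem _, (ciInf_le (Set.finite_range _).bddBelow A).trans (max_le ?_ ?_)⟩
  · simpa [envyAB, Finset.sum_indicator_eq_sum_inter, Finset.inter_comm Aᶜ, hA] using hD
  · simpa [envyBA, Finset.sum_indicator_eq_sum_inter, -Finset.coe_compl] using hD.trans hAc

/-- The first half of the `τ` repetitions, which selects the candidates; the other half certifies
them. -/
def firstHalf (τ : ℕ) : Finset (Fin τ) := {t | (t : ℕ) < τ / 2}

lemma card_firstHalf (τ : ℕ) : (firstHalf τ).card = τ / 2 := by
  rw [firstHalf, Fin.card_filter_val_lt, min_eq_right (Nat.div_le_self τ 2)]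

lemma le_card_compl_firstHalf (τ : ℕ) : τ / 2 ≤ (firstHalf τ)ᶜ.card := by
  rw [Finset.card_compl, card_firstHalf, Fintype.card_fin]
  omega

/-- A noise level for the mean of `k` observations of variance `v`, with `v` replaced by `v + 1` to
keep it positive for noiseless observations. -/
def batchStd (v : ℝ≥0) (k : ℕ) : ℝ≥0 := NNReal.sqrt ((v + 1) / k)

lemma batchStd_sq (v : ℝ≥0) (k : ℕ) : batchStd v k ^ 2 = (v + 1) / k := NNReal.sq_sqrt _

lemma batchStd_pos (v : ℝ≥0) {k : ℕ} (hk : 0 < k) : 0 < batchStd v k := by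
  unfold batchStd; positivity

lemma batchStd_le (v : ℝ≥0) {k : ℕ} (hk : 0 < k) : batchStd v k ≤ NNReal.sqrt (v + 1) :=
  NNReal.sqrt_le_sqrt.mpr (div_le_self zero_le (by exact_mod_cast hk))

lemma le_batchStd_sq_mul (v : ℝ≥0) {k n : ℕ} (hk : 0 < k) (hkn : k ≤ n) :
    v ≤ batchStd v k ^ 2 * n := by
  have hk' : (0 : ℝ≥0) < k := by exact_mod_cast hk
  calc v ≤ v + 1 := le_self_add
    _ = (v + 1) / k * k := (div_mul_cancel₀ _ hk'.ne').symm
    _ ≤ batchStd v k ^ 2 * n := by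
      rw [batchStd_sq]; gcongr

lemma isBigO_batchStd (v : ℝ≥0) {Δ : ℕ → ℝ} {τ : ℕ → ℕ}
    (hΔ : ∀ᶠ m in atTop, 0 < Δ m) (hτ : ∀ᶠ m in atTop, 2 ≤ τ m)
    (hτΔ : (fun m : ℕ => (m : ℝ) ^ ((3 : ℝ) / 2) / Δ m ^ 2 * log m) =O[atTop]
      fun m => (τ m : ℝ)) :
    (fun m : ℕ => m * (batchStd v (τ m / 2) : ℝ)) =O[atTop]
      fun m : ℕ => Δ m * (m : ℝ) ^ ((1 : ℝ) / 4) / √(log m) := by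
  obtain ⟨C, hC, hbound⟩ := hτΔ.exists_pos
  refine .of_bound √(3 * C * (v + 1)) ?_
  filter_upwards [hbound.bound, hΔ, hτ, eventually_gt_atTop 0,
    tendsto_log_natCast_atTop.eventually_gt_atTop 0] with m hm hΔm hτm hm0 hlog
  have hm0' : (0 : ℝ) < m := by exact_mod_cast hm0
  have hk : (0 : ℝ) < (τ m / 2 : ℕ) := by exact_mod_cast Nat.div_pos hτm two_pos
  have hτk : (τ m : ℝ) ≤ 3 * (τ m / 2 : ℕ) := by
    exact_mod_cast (by omega : τ m ≤ 3 * (τ m / 2))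
  have hpow : (m : ℝ) ^ ((3 : ℝ) / 2) * √m = m ^ 2 := by
    rw [sqrt_eq_rpow, ← rpow_add hm0']; norm_num
  rw [norm_of_nonneg (by positivity), norm_natCast] at hm
  rw [norm_of_nonneg (by positivity), norm_of_nonneg (by positivity)]
  refine le_of_sq_le_sq ?_ (by positivity)
  have hsq : (batchStd v (τ m / 2) : ℝ) ^ 2 = (v + 1) / (τ m / 2 : ℕ) := by
    exact_mod_cast congrArg NNReal.toReal (batchStd_sq v (τ m / 2))
  calc (m * (batchStd v (τ m / 2) : ℝ)) ^ 2
      = (m : ℝ) ^ ((3 : ℝ) / 2) / Δ m ^ 2 * log m *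
          ((v + 1) * (Δ m ^ 2 * √m / log m) / (τ m / 2 : ℕ)) := by
        rw [mul_pow, hsq, ← hpow]; field_simp
    _ ≤ C * (3 * (τ m / 2 : ℕ)) * ((v + 1) * (Δ m ^ 2 * √m / log m) / (τ m / 2 : ℕ)) := by
        exact mul_le_mul_of_nonneg_right (hm.trans (by gcongr)) (by positivity)
    _ = (√(3 * C * (v + 1)) * (Δ m * (m : ℝ) ^ ((1 : ℝ) / 4) / √(log m))) ^ 2 := by
        rw [mul_pow, div_pow, mul_pow, rpow_quarter_sq, sq_sqrt (by positivity), sq_sqrt hlog.le]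
        field_simp

variable {Δ : ℕ → ℝ}

lemma tendsto_div_rpow_quarter_mul_sqrt_log
    (hΔ : ∀ᶠ m : ℕ in atTop, (m : ℝ) ^ ((1 : ℝ) / 4) * log m ^ 2 ≤ Δ m) :
    Tendsto (fun m : ℕ => Δ m / ((m : ℝ) ^ ((1 : ℝ) / 4) * √(log m))) atTop atTop := by
  refine tendsto_atTop_mono' _ ?_ tendsto_log_natCast_atTop
  filter_upwards [hΔ, eventually_gt_atTop 0, tendsto_log_natCast_atTop.eventually_ge_atTop 1]
    with m hm hm0 hlog
  have hsqrt : √(log m) ≤ log m := sqrt_le_iff.mpr ⟨by linarith, by nlinarith⟩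
  have : 0 < √(log m) := sqrt_pos.mpr (by linarith)
  rw [le_div_iff₀ (by positivity)]
  calc log m * ((m : ℝ) ^ ((1 : ℝ) / 4) * √(log m))
      ≤ log m * ((m : ℝ) ^ ((1 : ℝ) / 4) * log m) := by gcongr
    _ = (m : ℝ) ^ ((1 : ℝ) / 4) * log m ^ 2 := by ring
    _ ≤ Δ m := hm

lemma eventually_le_half_of_tendsto_mul_log_div
    (hΔ : Tendsto (fun m : ℕ => Δ m * log m / m) atTop (nhds 0)) :
    ∀ᶠ m in atTop, Δ m ≤ (m / 2 : ℕ) := by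
  filter_upwards [hΔ.eventually_le_const (by norm_num : (0 : ℝ) < 1 / 4), eventually_ge_atTop 2,
    tendsto_log_natCast_atTop.eventually_ge_atTop 1] with m hm hm2 hlog
  rcases le_total (Δ m) 0 with hΔm | hΔm
  · exact hΔm.trans (Nat.cast_nonneg _)
  have hhalf : (m : ℝ) ≤ 4 * (m / 2 : ℕ) := by exact_mod_cast (by omega : m ≤ 4 * (m / 2))
  rw [div_le_iff₀ (by positivity)] at hm
  linarith [le_mul_of_one_le_right hΔm hlog]

lemma eventually_two_le_of_sq_log_le {τ : ℕ → ℕ} (hτ : ∀ m : ℕ, log m ^ 2 ≤ τ m) :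
    ∀ᶠ m in atTop, 2 ≤ τ m := by
  filter_upwards [tendsto_log_natCast_atTop.eventually_ge_atTop 2] with m hlog
  exact_mod_cast (by nlinarith [hτ m] : (2 : ℝ) ≤ τ m)

lemma sq_log_le_and_le_ceil (m : ℕ) (d : ℝ) :
    log m ^ 2 ≤ ⌈15 * ((m : ℝ) ^ ((3 : ℝ) / 2) / d ^ 2) * log m + log m ^ 2⌉₊ ∧
      (m : ℝ) ^ ((3 : ℝ) / 2) / d ^ 2 * log m ≤
        ⌈15 * ((m : ℝ) ^ ((3 : ℝ) / 2) / d ^ 2) * log m + log m ^ 2⌉₊ := by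
  have hceil := Nat.le_ceil (15 * ((m : ℝ) ^ ((3 : ℝ) / 2) / d ^ 2) * log m + log m ^ 2)
  have hmain : 0 ≤ (m : ℝ) ^ ((3 : ℝ) / 2) / d ^ 2 * log m := by positivity
  constructor <;> nlinarith [sq_nonneg (log m)]

theorem stmt1_general (v : ℝ≥0) (Δ : ℕ → ℝ) (τ : ℕ → ℕ)
    (hΔ_top : Tendsto (fun m : ℕ => Δ m / ((m : ℝ) ^ ((1 : ℝ) / 4) * √(log m))) atTop atTop)
    (hΔ_le : ∀ᶠ m in atTop, Δ m ≤ (m / 2 : ℕ))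
    (hτ : ∀ᶠ m in atTop, 2 ≤ τ m)
    (hτΔ : (fun m : ℕ => (m : ℝ) ^ ((3 : ℝ) / 2) / Δ m ^ 2 * log m) =O[atTop]
      fun m => (τ m : ℝ)) :
    ∃ alloc : (m : ℕ) → ((Fin m × Bool × Fin (τ m)) → ℝ) → Finset (Fin m),
      (∀ m (A : Finset (Fin m)), MeasurableSet {ω | alloc m ω = A}) ∧
      Tendsto (fun m : ℕ =>
          ⨅ p : {p : (Fin m → ℝ) × (Fin m → ℝ) //
              (∀ i, p.1 i ∈ Set.Icc (0 : ℝ) 1) ∧ (∀ i, p.2 i ∈ Set.Icc (0 : ℝ) 1) ∧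
              optEnvy p.1 p.2 ≤ -Δ m},
            (obsMeasure m (τ m) v p.val.1 p.val.2
                {ω | envy p.val.1 p.val.2 (alloc m ω) ≤ 0}).toReal)
        atTop (nhds 1) := by
  set σ : ℕ → ℝ≥0 := fun m => batchStd v (τ m / 2)
  have hσ := isBigO_batchStd v ((eventually_le_of_tendsto_div hΔ_top 1).mono
    fun m hm => one_pos.trans_le hm) hτ hτΔ
  have hk : ∀ᶠ m in atTop, 0 < τ m / 2 := hτ.mono fun m hm => Nat.div_pos hm two_pos
  have hfail := tendsto_failureBound (hk.mono fun m => batchStd_pos v)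
    (hk.mono fun m => batchStd_le v) hΔ_top hσ
  refine ⟨fun m => pathRule (firstHalf (τ m)) (firstHalf (τ m))ᶜ (gainBound m (σ m) (Δ m - 2) / 8),
    fun m A => measurableSet_pathRule_eq _ _ _ A,
    tendsto_ciInf_of_le (hΔ_le.mono fun m hm => nonempty_subtype.mpr (exists_optEnvy_le hm))
      (by simpa using hfail.const_sub 1) ?_ fun m p => measureReal_le_one⟩
  filter_upwards [eventually_le_of_tendsto_div hΔ_top 2, hk, eventually_gt_atTop 0,
    (tendsto_gainBound_div_log hΔ_top hσ).eventually_ge_atTop 24,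
    tendsto_log_natCast_atTop.eventually_ge_atTop 1] with m hΔm hkm hm hG hlog p
  rw [le_div_iff₀ (by linarith)] at hG
  have hpos := measureReal_envy_pathRule_pos_le hm (batchStd_pos v hkm)
    (Finset.card_pos.mp ((card_firstHalf _).symm ▸ hkm))
    (Finset.card_pos.mp (hkm.trans_le (le_card_compl_firstHalf _))) disjoint_compl_right
    (le_batchStd_sq_mul v hkm (card_firstHalf _).ge)
    (le_batchStd_sq_mul v hkm (le_card_compl_firstHalf _)) p.2.1 p.2.2.1 (sub_nonneg.mpr hΔm)
    (by simpa using p.2.2.2) (by linarith)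
  simp only [← not_le] at hpos
  exact (sub_le_sub_left hpos 1).trans (one_sub_measureReal_compl_le _)

end Main

/-- with unit-variance noise, `q(m) = m ⌈15 (m^{3/2}/Δ(m)²) log m + (log m)²⌉`
queries (i.e. `τ(m) = q(m)/m` samples per item and agent) suffice: there is a measurable
allocation rule whose worst-case (over profiles with `OptEnvy ≤ -Δ(m)`) probability of
outputting an envy-free allocation tends to `1`. -/
theorem stmt1 (Δ : ℕ → ℝ)
    (hΔ1 : ∀ᶠ m : ℕ in atTop, (m : ℝ) ^ ((1 : ℝ) / 4) * Real.log m ^ 2 ≤ Δ m)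
    (hΔ2 : Tendsto (fun m : ℕ => Δ m * Real.log m / m) atTop (nhds 0))
    (τ : ℕ → ℕ)
    (hτ : ∀ m : ℕ,
      τ m = ⌈15 * ((m : ℝ) ^ ((3 : ℝ) / 2) / Δ m ^ 2) * Real.log m + Real.log m ^ 2⌉₊) :
    ∃ alloc : (m : ℕ) → ((Fin m × Bool × Fin (τ m)) → ℝ) → Finset (Fin m),
      (∀ m (A : Finset (Fin m)), MeasurableSet {ω | alloc m ω = A}) ∧
      Tendsto (fun m : ℕ =>
          ⨅ p : {p : (Fin m → ℝ) × (Fin m → ℝ) //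
              (∀ i, p.1 i ∈ Set.Icc (0 : ℝ) 1) ∧ (∀ i, p.2 i ∈ Set.Icc (0 : ℝ) 1) ∧
              optEnvy p.1 p.2 ≤ -Δ m},
            (obsMeasure m (τ m) 1 p.val.1 p.val.2
                {ω | envy p.val.1 p.val.2 (alloc m ω) ≤ 0}).toReal)
        atTop (nhds 1) := by
  have hbound := fun m => hτ m ▸ sq_log_le_and_le_ceil m (Δ m)
  exact stmt1_general 1 Δ τ (tendsto_div_rpow_quarter_mul_sqrt_log hΔ1)
    (eventually_le_half_of_tendsto_mul_log_div hΔ2)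
    (eventually_two_le_of_sq_log_le fun m => (hbound m).1)
    (.of_bound' (.of_forall fun m => by
      rw [norm_of_nonneg (by positivity), norm_natCast]; exact (hbound m).2))
end
end

section
/- For every real z: if |z| > 1 then (1 − 2Q(z))·z ≥ 0.68·|z|, and if |z| ≤ 1 then (1 − 2Q(z))·z ≥ 0.48·z². -/
open Real

noncomputable section

/-- The standard Gaussian upper-tail function `Q(z) = (1/√(2π)) ∫_z^∞ e^{−x²/2} dx`. -/
def gaussQ (z : ℝ) : ℝ := (1 / Real.sqrt (2 * Real.pi)) * ∫ x in Set.Ioi z, Real.exp (-x ^ 2 / 2)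

/-!
The function `1 - 2 Q` is odd, so `(1 - 2 Q z) z` is even and it suffices to treat `0 ≤ z`. There
the density `e^{-x²/2}` decreases, so `Q` is convex and `1 - 2 Q` is concave and increasing. As it
vanishes at `0`, it lies above `(1 - 2 Q 1) z` on `[0, 1]` and above `1 - 2 Q 1` on `[1, ∞)`.
Finally `1 - 2 Q 1 = 0.6826…`, which the Taylor polynomial of degree `3` of `exp` bounds below
by `0.68`.
-/

section GaussianTail

open Set MeasureTheory intervalIntegral
open scoped Nat

theorem sum_range_pow_div_factorial_le_exp_of_even {n : ℕ} (hn : Even n) (x : ℝ) :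
    ∑ i ∈ Finset.range n, x ^ i / i ! ≤ exp x := by
  obtain _ | m := n
  · simpa only [Finset.range_zero, Finset.sum_empty] using (exp_pos x).le
  obtain rfl | hx := eq_or_ne x 0
  · simp [Finset.sum_range_succ']
  have taylor_eq : taylorWithinEval exp m (uIcc 0 x) 0 x =
      ∑ i ∈ Finset.range (m + 1), x ^ i / i ! := by
    rw [taylor_within_apply]
    refine Finset.sum_congr rfl fun i _ ↦ ?_
    rw [iteratedDerivWithin_eq_iteratedDeriv (uniqueDiffOn_uIcc hx.symm) contDiff_exp.contDiffAt
      left_mem_uIcc, iteratedDeriv_eq_iterate, iter_deriv_exp, exp_zero, sub_zero, smul_eq_mul,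
      mul_one, inv_mul_eq_div]
  obtain ⟨ξ, -, hξ⟩ :=
    taylor_mean_remainder_lagrange_iteratedDeriv (n := m) hx.symm contDiff_exp.contDiffOn
  rw [taylor_eq, iteratedDeriv_eq_iterate, iter_deriv_exp, sub_zero] at hξ
  have remainder_nonneg : 0 ≤ exp ξ * x ^ (m + 1) / (m + 1)! :=
    div_nonneg (mul_nonneg (exp_pos ξ).le (hn.pow_nonneg x)) (Nat.cast_nonneg _)
  linarith

theorem continuous_exp_neg_sq_div_two : Continuous fun x : ℝ ↦ exp (-x ^ 2 / 2) := by
  fun_prop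

theorem integrable_exp_neg_sq_div_two : Integrable fun x : ℝ ↦ exp (-x ^ 2 / 2) := by
  simpa only [neg_mul, one_div, inv_mul_eq_div, neg_div] using
    integrable_exp_neg_mul_sq (one_half_pos (α := ℝ))

theorem integral_exp_neg_sq_div_two : ∫ x : ℝ, exp (-x ^ 2 / 2) = √(2 * π) := by
  simpa only [neg_mul, one_div, inv_mul_eq_div, neg_div, div_inv_eq_mul, mul_comm π] using
    integral_gaussian (1 / 2)

theorem sum_range_le_integral_exp_neg_sq_div_two_of_even {n : ℕ} (hn : Even n) {z : ℝ}
    (hz : 0 ≤ z) :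
    ∑ i ∈ Finset.range n, (-1 / 2) ^ i / i ! * (z ^ (2 * i + 1) / (2 * i + 1)) ≤
      ∫ x in (0 : ℝ)..z, exp (-x ^ 2 / 2) :=
  calc
    _ = ∫ x in (0 : ℝ)..z, ∑ i ∈ Finset.range n, (-1 / 2) ^ i / i ! * x ^ (2 * i) := by
      rw [integral_finsetSum fun i _ ↦ Continuous.intervalIntegrable (by fun_prop) _ _]
      simp [intervalIntegral.integral_const_mul, integral_pow]
    _ ≤ ∫ x in (0 : ℝ)..z, exp (-x ^ 2 / 2) := by
      refine integral_mono_on hz (Continuous.intervalIntegrable (by fun_prop) _ _)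
        (continuous_exp_neg_sq_div_two.intervalIntegrable _ _) fun x _ ↦ ?_
      convert sum_range_pow_div_factorial_le_exp_of_even hn (-x ^ 2 / 2) using 2 with i
      rw [pow_mul, div_mul_eq_mul_div, ← mul_pow]
      ring

theorem gaussQ_neg (z : ℝ) : gaussQ (-z) = 1 - gaussQ z := by
  have reflect : ∫ x in Ioi (-z), exp (-x ^ 2 / 2) = ∫ x in Iic z, exp (-x ^ 2 / 2) := by
    simp only [← integral_comp_neg_Iic, neg_sq]
  have total : (∫ x in Iic z, exp (-x ^ 2 / 2)) + ∫ x in Ioi z, exp (-x ^ 2 / 2) = √(2 * π) := by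
    rw [integral_Iic_add_Ioi integrable_exp_neg_sq_div_two.integrableOn
      integrable_exp_neg_sq_div_two.integrableOn, integral_exp_neg_sq_div_two]
  rw [gaussQ, gaussQ, reflect, eq_sub_iff_add_eq, ← mul_add, total]
  exact one_div_mul_cancel (by positivity)

theorem gaussQ_zero : gaussQ 0 = 1 / 2 := by
  have := gaussQ_neg 0
  rw [neg_zero] at this
  linarith

theorem gaussQ_eq_half_sub (z : ℝ) :
    gaussQ z = 1 / 2 - 1 / √(2 * π) * ∫ x in (0 : ℝ)..z, exp (-x ^ 2 / 2) := by
  rw [← gaussQ_zero, gaussQ, gaussQ,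
    ← integral_Ioi_sub_Ioi' integrable_exp_neg_sq_div_two.integrableOn
      integrable_exp_neg_sq_div_two.integrableOn]
  ring

theorem hasDerivAt_gaussQ (z : ℝ) :
    HasDerivAt gaussQ (-(1 / √(2 * π) * exp (-z ^ 2 / 2))) z := by
  rw [funext gaussQ_eq_half_sub]
  exact ((continuous_exp_neg_sq_div_two.integral_hasStrictDerivAt 0 z).hasDerivAt.const_mul
    _).const_sub _

theorem antitone_gaussQ : Antitone gaussQ :=
  antitone_of_hasDerivAt_nonpos hasDerivAt_gaussQ fun z ↦ neg_nonpos.2 (by positivity)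

theorem convexOn_gaussQ : ConvexOn ℝ (Ici 0) gaussQ := by
  have differentiable : Differentiable ℝ gaussQ := fun z ↦ (hasDerivAt_gaussQ z).differentiableAt
  refine MonotoneOn.convexOn_of_deriv (convex_Ici 0) differentiable.continuous.continuousOn
    differentiable.differentiableOn ?_
  rw [interior_Ici, funext fun z ↦ (hasDerivAt_gaussQ z).deriv]
  intro x (hx : 0 < x) y _ hxy
  dsimp only
  gcongr

theorem gaussQ_one_le : gaussQ 1 ≤ 0.16 := by
  have integral_ge : 0.855 ≤ ∫ x in (0 : ℝ)..1, exp (-x ^ 2 / 2) := by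
    refine le_trans ?_
      (sum_range_le_integral_exp_neg_sq_div_two_of_even (n := 4) (by decide) zero_le_one)
    norm_num [Finset.sum_range_succ, Nat.factorial]
  have sqrt_le : √(2 * π) ≤ 2.51 :=
    sqrt_le_iff.2 ⟨by norm_num, by linarith [pi_lt_d2]⟩
  calc
    gaussQ 1 = 1 / 2 - 1 / √(2 * π) * ∫ x in (0 : ℝ)..1, exp (-x ^ 2 / 2) := gaussQ_eq_half_sub 1
    _ ≤ 1 / 2 - 1 / 2.51 * 0.855 := by gcongr
    _ ≤ 0.16 := by norm_num

theorem mul_min_le_one_sub_two_mul_gaussQ {z : ℝ} (hz : 0 ≤ z) :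
    (1 - 2 * gaussQ 1) * min 1 z ≤ 1 - 2 * gaussQ z := by
  obtain h | h := le_total 1 z
  · rw [min_eq_left h, mul_one]
    linarith [antitone_gaussQ h]
  · have chord : gaussQ z ≤ (1 - z) * gaussQ 0 + z * gaussQ 1 := by
      simpa using convexOn_gaussQ.2 self_mem_Ici (zero_le_one : (0 : ℝ) ≤ 1)
        (sub_nonneg.2 h) hz (sub_add_cancel 1 z)
    rw [gaussQ_zero] at chord
    rw [min_eq_right h]
    linarith

theorem one_sub_two_mul_gaussQ_abs_mul_abs (z : ℝ) :
    (1 - 2 * gaussQ |z|) * |z| = (1 - 2 * gaussQ z) * z := by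
  obtain h | h := abs_choice z
  · rw [h]
  · rw [h, gaussQ_neg]
    ring

end GaussianTail

theorem stmt7_general (z : ℝ) : 0.68 * min |z| (|z| ^ 2) ≤ (1 - 2 * gaussQ z) * z :=
  calc
    0.68 * min |z| (|z| ^ 2) = 0.68 * min 1 |z| * |z| := by
      rw [mul_assoc, min_mul_of_nonneg _ _ (abs_nonneg z), one_mul, sq]
    _ ≤ (1 - 2 * gaussQ 1) * min 1 |z| * |z| := by
      gcongr
      linarith [gaussQ_one_le]
    _ ≤ (1 - 2 * gaussQ |z|) * |z| := by
      gcongr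
      exact mul_min_le_one_sub_two_mul_gaussQ (abs_nonneg z)
    _ = (1 - 2 * gaussQ z) * z := one_sub_two_mul_gaussQ_abs_mul_abs z

/-- if `|z| > 1` then `(1 − 2Q(z)) z ≥ 0.68 |z|`, and if `|z| ≤ 1` then
`(1 − 2Q(z)) z ≥ 0.48 z²`. -/
theorem stmt7 (z : ℝ) :
    (1 < |z| → 0.68 * |z| ≤ (1 - 2 * gaussQ z) * z) ∧
    (|z| ≤ 1 → 0.48 * z ^ 2 ≤ (1 - 2 * gaussQ z) * z) :=
  ⟨fun hz ↦ by linarith [stmt7_general z, min_eq_left (le_self_pow₀ hz.le two_ne_zero)],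
    fun hz ↦ by linarith [stmt7_general z, sq_abs z, sq_nonneg z,
      min_eq_right (pow_le_of_le_one (abs_nonneg z) hz two_ne_zero)]⟩
end
end
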